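/- arXiv:1211.7236 — 3 statements merged into one kernel-verified Lean document; each statement's English description precedes it below -/
import Mathlib

section
/- Fix c > 0 and T > 0. There exists a constant C₁ > 0 such that for every smooth solution (E, B) on [0,T]×𝕋² of the homogeneous 2D Maxwell system ∂ₜB + c(∂_{x₁}E₂ − ∂_{x₂}E₁) = 0, ∂ₜE + c(∂_{x₂}B, −∂_{x₁}B) = 0, with div E(0,·) = 0 and ∫_{𝕋²} B(0,x) dx = 0, one has ∫₀ᵀ∫_{𝕋²} |B|² dx dt ≤ C₁ ∫₀ᵀ∫_{𝕋²} |E|² dx dt. -/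
noncomputable section

open MeasureTheory Real

/-- Points of the plane; the torus `𝕋²` is represented via `ℤ²`-periodic objects on `ℝ²`. -/
abbrev V2 := ℝ × ℝ

/-- `v ↦ v⊥ = (v₂, -v₁)`. -/
def pperp (v : V2) : V2 := (v.2, -v.1)

/-- Euclidean norm on `ℝ²`. -/
noncomputable def en (v : V2) : ℝ := Real.sqrt (v.1 ^ 2 + v.2 ^ 2)

/-- Relativistic velocity `v̂ = v/√(1+|v|²/c²)` for speed of light `c`. -/
noncomputable def vhat (c : ℝ) (v : V2) : V2 :=
  (1 / Real.sqrt (1 + (v.1 ^ 2 + v.2 ^ 2) / c ^ 2)) • v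

/-- `ℤ²`-periodicity of a function on `ℝ²` (i.e. the function lives on the torus `𝕋²`). -/
def Zper {α : Type*} (g : V2 → α) : Prop :=
  ∀ (x : V2) (m n : ℤ), g (x.1 + (m : ℝ), x.2 + (n : ℝ)) = g x

/-- A fundamental domain for the torus. -/
def unitSq : Set V2 := Set.Icc ((0 : ℝ), (0 : ℝ)) ((1 : ℝ), (1 : ℝ))

/-- Integral over the torus of a (periodic) function. -/
noncomputable def intT2 (g : V2 → ℝ) : ℝ := ∫ x in unitSq, g x

/-- Integral over `𝕋² × ℝ²`. -/
noncomputable def intT2R2 (g : V2 → V2 → ℝ) : ℝ := ∫ x in unitSq, ∫ v : V2, g x v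

/-- Spatial divergence of a vector field on `ℝ²`. -/
noncomputable def divF (E : V2 → V2) (x : V2) : ℝ :=
  fderiv ℝ (fun y => (E y).1) x ((1 : ℝ), (0 : ℝ)) +
    fderiv ℝ (fun y => (E y).2) x ((0 : ℝ), (1 : ℝ))

/-- Geometric control condition for a (periodic) set `ω ⊆ 𝕋²`. -/
def GCC (ω : Set V2) : Prop :=
  ∀ x e : V2, en e = 1 → ∃ y : ℝ, 0 ≤ y ∧ x + y • e ∈ ω

/-- Open ball of the torus, of center `x₀` and radius `r` (as a periodic subset of `ℝ²`). -/
def ballT2 (x₀ : V2) (r : ℝ) : Set V2 :=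
  {x : V2 | ∃ m n : ℤ, en (x.1 - (x₀.1 + (m : ℝ)), x.2 - (x₀.2 + (n : ℝ))) < r}

/-- The full preimage in `ℝ²` of the image in `𝕋²` of the line through `p` directed by `d`. -/
def periodizedLine (p d : V2) : Set V2 :=
  {x : V2 | ∃ (t : ℝ) (m n : ℤ), x = p + t • d + ((m : ℝ), (n : ℝ))}

/-- The strip assumption: `ω` contains the image of a straight line of `ℝ²`
which is closed in the torus. -/
def StripAssumption (ω : Set V2) : Prop :=
  ∃ p d : V2, d ≠ 0 ∧ IsClosed (periodizedLine p d) ∧ periodizedLine p d ⊆ ω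

/-- All iterated derivatives of order at most `k` are bounded by `κ` in sup norm. -/
def DerivBound {E F : Type*} [NormedAddCommGroup E] [NormedSpace ℝ E]
    [NormedAddCommGroup F] [NormedSpace ℝ F] (k : ℕ) (κ : ℝ) (g : E → F) : Prop :=
  ∀ i : ℕ, i ≤ k → ∀ p, ‖iteratedFDeriv ℝ i g p‖ ≤ κ

/-- Relativistic characteristics for the force field `Force`, with speed of light `c`,
starting from `(x,v)` at time `s`. -/
def IsRelChar (c : ℝ) (Force : ℝ → V2 → V2 → V2) (s : ℝ) (x v : V2)
    (X V : ℝ → V2) : Prop :=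
  X s = x ∧ V s = v ∧
    ∀ t : ℝ, HasDerivAt X (vhat c (V t)) t ∧ HasDerivAt V (Force t (X t) (V t)) t

/-- `(F, E, b)` is a classical, `𝕋²`-periodic solution on `[0,T]` of the 2D relativistic
Vlasov–Maxwell system with speed of light `c` and source `S`. -/
def IsVMSolution (c T : ℝ) (F : ℝ × V2 × V2 → ℝ) (E : ℝ × V2 → V2)
    (b : ℝ × V2 → ℝ) (S : ℝ × V2 × V2 → ℝ) : Prop :=
  ContDiff ℝ 1 F ∧ ContDiff ℝ 1 E ∧ ContDiff ℝ 1 b ∧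
  (∀ t v, Zper fun x => F (t, x, v)) ∧ (∀ t, Zper fun x => E (t, x)) ∧
  (∀ t, Zper fun x => b (t, x)) ∧
  ∀ t ∈ Set.Icc (0 : ℝ) T, ∀ x v : V2,
    -- Vlasov equation: ∂ₜf + v̂·∇ₓf + (E + c⁻¹ v̂⊥ b)·∇ᵥf = S
    (fderiv ℝ F (t, x, v)
        ((1 : ℝ), vhat c v, E (t, x) + (c⁻¹ * b (t, x)) • pperp (vhat c v))
      = S (t, x, v)) ∧
    -- ∂ₜE₁ − c ∂_{x₂} b = −∫ f v̂₁ dv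
    (fderiv ℝ (fun p => (E p).1) (t, x) ((1 : ℝ), ((0 : ℝ), (0 : ℝ)))
        - c * fderiv ℝ b (t, x) ((0 : ℝ), ((0 : ℝ), (1 : ℝ)))
      = -∫ w : V2, F (t, x, w) * (vhat c w).1) ∧
    -- ∂ₜE₂ + c ∂_{x₁} b = −∫ f v̂₂ dv
    (fderiv ℝ (fun p => (E p).2) (t, x) ((1 : ℝ), ((0 : ℝ), (0 : ℝ)))
        + c * fderiv ℝ b (t, x) ((0 : ℝ), ((1 : ℝ), (0 : ℝ)))
      = -∫ w : V2, F (t, x, w) * (vhat c w).2) ∧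
    -- ∂ₜb + c (∂_{x₁}E₂ − ∂_{x₂}E₁) = 0
    (fderiv ℝ b (t, x) ((1 : ℝ), ((0 : ℝ), (0 : ℝ)))
        + c * (fderiv ℝ (fun p => (E p).2) (t, x) ((0 : ℝ), ((1 : ℝ), (0 : ℝ)))
            - fderiv ℝ (fun p => (E p).1) (t, x) ((0 : ℝ), ((0 : ℝ), (1 : ℝ)))) = 0) ∧
    -- Gauss law: ∂_{x₁}E₁ + ∂_{x₂}E₂ = ∫ f dv − ∫∫ f dv dx
    (fderiv ℝ (fun p => (E p).1) (t, x) ((0 : ℝ), ((1 : ℝ), (0 : ℝ)))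
        + fderiv ℝ (fun p => (E p).2) (t, x) ((0 : ℝ), ((0 : ℝ), (1 : ℝ)))
      = (∫ w : V2, F (t, x, w)) - intT2R2 fun y w => F (t, y, w))


/-- `(E, b)` is a smooth, periodic solution on `[0,T]` of the homogeneous 2D Maxwell
system `∂ₜb + c(∂₁E₂ − ∂₂E₁) = 0`, `∂ₜE + c(∂₂b, −∂₁b) = 0`. -/
def IsHomMaxwellSolution (c T : ℝ) (E : ℝ × V2 → V2) (b : ℝ × V2 → ℝ) : Prop :=
  ContDiff ℝ (⊤ : ℕ∞) E ∧ ContDiff ℝ (⊤ : ℕ∞) b ∧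
  (∀ t, Zper fun x => E (t, x)) ∧ (∀ t, Zper fun x => b (t, x)) ∧
  ∀ t ∈ Set.Icc (0 : ℝ) T, ∀ x : V2,
    (fderiv ℝ b (t, x) ((1 : ℝ), ((0 : ℝ), (0 : ℝ)))
        + c * (fderiv ℝ (fun p => (E p).2) (t, x) ((0 : ℝ), ((1 : ℝ), (0 : ℝ)))
            - fderiv ℝ (fun p => (E p).1) (t, x) ((0 : ℝ), ((0 : ℝ), (1 : ℝ)))) = 0) ∧
    (fderiv ℝ (fun p => (E p).1) (t, x) ((1 : ℝ), ((0 : ℝ), (0 : ℝ)))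
        + c * fderiv ℝ b (t, x) ((0 : ℝ), ((0 : ℝ), (1 : ℝ))) = 0) ∧
    (fderiv ℝ (fun p => (E p).2) (t, x) ((1 : ℝ), ((0 : ℝ), (0 : ℝ)))
        - c * fderiv ℝ b (t, x) ((0 : ℝ), ((1 : ℝ), (0 : ℝ))) = 0)

/-- Differentiation under the integral sign over a compact set, for jointly continuous data. -/
lemma hasDerivAt_setIntegral_of_continuous {X : Type*} [TopologicalSpace X] [MeasurableSpace X]
    [OpensMeasurableSpace X] [T2Space X] [SecondCountableTopology X]
    {μ : Measure X} [IsFiniteMeasureOnCompacts μ] {K : Set X} (hK : IsCompact K)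
    {F F' : ℝ → X → ℝ} (hF : Continuous (Function.uncurry F))
    (hF' : Continuous (Function.uncurry F'))
    (hd : ∀ t x, HasDerivAt (fun s => F s x) (F' t x) t) (t : ℝ) :
    HasDerivAt (fun s => ∫ x in K, F s x ∂μ) (∫ x in K, F' t x ∂μ) t := by
  have hFt : ∀ s, Continuous (F s) := fun s => hF.comp (by fun_prop : Continuous fun x => (s, x))
  have hFt' : ∀ s, Continuous (F' s) := fun s => hF'.comp (by fun_prop : Continuous fun x => (s, x))
  obtain ⟨M, hM⟩ := ((isCompact_closedBall t 1).prod hK).exists_bound_of_continuousOn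
    hF'.continuousOn
  refine (hasDerivAt_integral_of_dominated_loc_of_deriv_le (bound := fun _ => M)
    (Metric.closedBall_mem_nhds t one_pos) (Filter.Eventually.of_forall fun s => ?_) ?_ ?_ ?_ ?_
    ?_).2
  · exact (hFt s).aestronglyMeasurable
  · exact (hFt t).continuousOn.integrableOn_compact hK
  · exact (hFt' t).aestronglyMeasurable
  · filter_upwards [ae_restrict_mem hK.measurableSet] with x hx s hs
    exact hM (s, x) ⟨hs, hx⟩
  · exact continuousOn_const.integrableOn_compact hK
  · exact Filter.Eventually.of_forall fun x s _ => hd s x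

lemma isCompact_unitSq : IsCompact unitSq := isCompact_Icc

lemma integrableOn_unitSq {g : V2 → ℝ} (hg : Continuous g) : IntegrableOn g unitSq :=
  hg.continuousOn.integrableOn_compact isCompact_unitSq

lemma intT2_add {f g : V2 → ℝ} (hf : Continuous f) (hg : Continuous g) :
    intT2 (fun x => f x + g x) = intT2 f + intT2 g :=
  integral_add (integrableOn_unitSq hf) (integrableOn_unitSq hg)

lemma intT2_sub {f g : V2 → ℝ} (hf : Continuous f) (hg : Continuous g) :
    intT2 (fun x => f x - g x) = intT2 f - intT2 g :=
  integral_sub (integrableOn_unitSq hf) (integrableOn_unitSq hg)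

lemma intT2_const_mul (a : ℝ) (g : V2 → ℝ) : intT2 (fun x => a * g x) = a * intT2 g :=
  integral_const_mul a g

lemma intT2_mono {f g : V2 → ℝ} (hf : Continuous f) (hg : Continuous g) (h : ∀ x, f x ≤ g x) :
    intT2 f ≤ intT2 g :=
  setIntegral_mono (integrableOn_unitSq hf) (integrableOn_unitSq hg) h

lemma continuous_intT2 {X : Type*} [TopologicalSpace X] [FirstCountableTopology X]
    [LocallyCompactSpace X] {F : X → V2 → ℝ} (hF : Continuous (Function.uncurry F)) :
    Continuous fun t => intT2 (F t) :=
  continuous_parametric_integral_of_continuous hF isCompact_unitSq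

lemma continuous_intervalIntegral_param {X : Type*} [TopologicalSpace X]
    {F : X → ℝ → ℝ} (hF : Continuous (Function.uncurry F)) (a b : ℝ) :
    Continuous fun x => ∫ t in a..b, F x t :=
  intervalIntegral.continuous_parametric_intervalIntegral_of_continuous' hF a b

lemma hasDerivAt_intervalIntegral_of_continuous {a b : ℝ} (hab : a ≤ b) {F F' : ℝ → ℝ → ℝ}
    (hF : Continuous (Function.uncurry F)) (hF' : Continuous (Function.uncurry F'))
    (hd : ∀ t x, HasDerivAt (fun s => F s x) (F' t x) t) (t : ℝ) :
    HasDerivAt (fun s => ∫ x in a..b, F s x) (∫ x in a..b, F' t x) t := by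
  simpa only [intervalIntegral.integral_of_le hab, ← integral_Icc_eq_integral_Ioc] using
    hasDerivAt_setIntegral_of_continuous (μ := volume) (isCompact_Icc (a := a) (b := b)) hF hF' hd t

/-- Fubini for an integral over a time interval and the torus. -/
lemma intervalIntegral_intT2_swap {a b : ℝ} {F : ℝ → V2 → ℝ}
    (hF : Continuous (Function.uncurry F)) :
    ∫ t in a..b, intT2 (F t) = intT2 fun x => ∫ t in a..b, F t x := by
  refine intervalIntegral_integral_swap ?_
  rw [Measure.prod_restrict]
  exact (hF.continuousOn.integrableOn_compact (isCompact_uIcc.prod isCompact_unitSq)).mono_set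
    (Set.prod_mono Set.uIoc_subset_uIcc subset_rfl)

lemma intT2_eq_iterated {g : V2 → ℝ} (hg : Continuous g) :
    intT2 g = ∫ x in (0 : ℝ)..1, ∫ y in (0 : ℝ)..1, g (x, y) := by
  have h : unitSq = Set.Icc (0 : ℝ) 1 ×ˢ Set.Icc (0 : ℝ) 1 := (Set.Icc_prod_Icc _ _ _ _).symm
  have hi := integrableOn_unitSq hg
  rw [intT2, h, Measure.volume_eq_prod, setIntegral_prod g (by rwa [h, Measure.volume_eq_prod] at hi)]
  simp only [intervalIntegral.integral_of_le zero_le_one, integral_Icc_eq_integral_Ioc]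

lemma intT2_eq_iterated_swap {g : V2 → ℝ} (hg : Continuous g) :
    intT2 g = ∫ y in (0 : ℝ)..1, ∫ x in (0 : ℝ)..1, g (x, y) := by
  rw [intT2_eq_iterated hg, intervalIntegral_intervalIntegral_swap]
  exact (hg.continuousOn.integrableOn_compact (isCompact_uIcc.prod isCompact_uIcc)).mono_set
    (Set.prod_mono Set.uIoc_subset_uIcc Set.uIoc_subset_uIcc)

lemma intT2_partial_fst_eq_zero {g g' : V2 → ℝ} (hper : Zper g) (hg' : Continuous g')
    (hd : ∀ x y, HasDerivAt (fun z => g (z, y)) (g' (x, y)) x) : intT2 g' = 0 := by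
  rw [intT2_eq_iterated_swap hg']
  refine (intervalIntegral.integral_congr fun y _ => ?_).trans intervalIntegral.integral_zero
  have h1 : g (1, y) = g (0, y) := by simpa using hper (0, y) 1 0
  have hc : Continuous fun x => g' (x, y) := by fun_prop
  rw [intervalIntegral.integral_eq_sub_of_hasDerivAt (fun x _ => hd x y)
    (hc.intervalIntegrable _ _), h1, sub_self]

lemma intT2_partial_snd_eq_zero {g g' : V2 → ℝ} (hper : Zper g) (hg' : Continuous g')
    (hd : ∀ x y, HasDerivAt (fun z => g (x, z)) (g' (x, y)) y) : intT2 g' = 0 := by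
  rw [intT2_eq_iterated hg']
  refine (intervalIntegral.integral_congr fun x _ => ?_).trans intervalIntegral.integral_zero
  have h1 : g (x, 1) = g (x, 0) := by simpa using hper (x, 0) 0 1
  have hc : Continuous fun y => g' (x, y) := by fun_prop
  rw [intervalIntegral.integral_eq_sub_of_hasDerivAt (fun y _ => hd x y)
    (hc.intervalIntegrable _ _), h1, sub_self]

/-- Cauchy–Schwarz against the constant function on an interval. -/
lemma sq_intervalIntegral_le {a b : ℝ} (hab : a ≤ b) {h : ℝ → ℝ} (hh : Continuous h) :
    (∫ t in a..b, h t) ^ 2 ≤ (b - a) * ∫ t in a..b, h t ^ 2 := by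
  rcases hab.eq_or_lt with rfl | hlt
  · simp
  set m := ∫ t in a..b, h t with hm
  have h0 : 0 ≤ ∫ t in a..b, ((b - a) * h t - m) ^ 2 :=
    intervalIntegral.integral_nonneg hab fun t _ => sq_nonneg _
  have h1 : ∫ t in a..b, ((b - a) * h t - m) ^ 2
      = (b - a) * ((b - a) * (∫ t in a..b, h t ^ 2) - m ^ 2) := by
    have : ∀ t, ((b - a) * h t - m) ^ 2
        = (b - a) ^ 2 * h t ^ 2 - 2 * (b - a) * m * h t + m ^ 2 := fun t => by ring
    simp only [this]
    rw [intervalIntegral.integral_add, intervalIntegral.integral_sub,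
      intervalIntegral.integral_const_mul, intervalIntegral.integral_const_mul,
      intervalIntegral.integral_const, ← hm, smul_eq_mul]
    · ring
    all_goals exact Continuous.intervalIntegrable (by fun_prop) _ _
  rw [h1] at h0
  linarith [nonneg_of_mul_nonneg_right h0 (sub_pos.2 hlt)]

lemma sq_intervalIntegral_mul_le {T M : ℝ} (hT : 0 ≤ T) {φ h : ℝ → ℝ}
    (hφ : Continuous φ) (hh : Continuous h) (hM : ∀ t ∈ Set.Icc 0 T, φ t ^ 2 ≤ M) :
    (∫ t in (0 : ℝ)..T, φ t * h t) ^ 2 ≤ T * M * ∫ t in (0 : ℝ)..T, h t ^ 2 := by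
  have h1 := sq_intervalIntegral_le hT (h := fun t => φ t * h t) (by fun_prop)
  have h2 : ∫ t in (0 : ℝ)..T, (φ t * h t) ^ 2 ≤ ∫ t in (0 : ℝ)..T, M * h t ^ 2 := by
    refine intervalIntegral.integral_mono_on hT (Continuous.intervalIntegrable (by fun_prop) _ _)
      (Continuous.intervalIntegrable (by fun_prop) _ _) fun t ht => ?_
    rw [mul_pow]
    exact mul_le_mul_of_nonneg_right (hM t ht) (sq_nonneg _)
  rw [intervalIntegral.integral_const_mul] at h2
  have h3 := mul_le_mul_of_nonneg_left h2 hT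
  simp only [sub_zero] at h1
  linarith

lemma sq_sub_le_integral_sq_deriv {u u' : ℝ → ℝ} (hu' : Continuous u')
    (hd : ∀ x, HasDerivAt u (u' x) x) {x y : ℝ} (hx : x ∈ Set.Icc (0 : ℝ) 1)
    (hy : y ∈ Set.Icc (0 : ℝ) 1) :
    (u x - u y) ^ 2 ≤ ∫ z in (0 : ℝ)..1, u' z ^ 2 := by
  wlog hyx : y ≤ x generalizing x y
  · have := this hy hx (le_of_not_ge hyx)
    rwa [← neg_sub, neg_sq] at this
  have hi : ∀ a b, IntervalIntegrable (fun z => u' z ^ 2) volume a b := fun a b =>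
    Continuous.intervalIntegrable (by fun_prop) _ _
  rw [← intervalIntegral.integral_eq_sub_of_hasDerivAt (fun z _ => hd z)
    (hu'.intervalIntegrable _ _)]
  have h1 := sq_intervalIntegral_le hyx hu'
  have h2 : ∫ z in y..x, u' z ^ 2 ≤ ∫ z in (0 : ℝ)..1, u' z ^ 2 :=
    intervalIntegral.integral_mono_interval hy.1 hyx hx.2
      (Filter.Eventually.of_forall fun z => sq_nonneg _) (hi _ _)
  have h3 : 0 ≤ ∫ z in y..x, u' z ^ 2 :=
    intervalIntegral.integral_nonneg hyx fun z _ => sq_nonneg _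
  nlinarith [hy.1, hx.2]

/-- Poincaré inequality on the unit interval. -/
lemma poincare_interval {u u' : ℝ → ℝ} (hu' : Continuous u')
    (hd : ∀ x, HasDerivAt u (u' x) x) :
    ∫ x in (0 : ℝ)..1, u x ^ 2
      ≤ (∫ x in (0 : ℝ)..1, u x) ^ 2 + ∫ x in (0 : ℝ)..1, u' x ^ 2 := by
  have hu : Continuous u := continuous_iff_continuousAt.2 fun x => (hd x).continuousAt
  set m := ∫ x in (0 : ℝ)..1, u x with hm
  set D := ∫ x in (0 : ℝ)..1, u' x ^ 2 with hD
  have hpt : ∀ x ∈ Set.Icc (0 : ℝ) 1, (u x - m) ^ 2 ≤ D := by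
    intro x hx
    have h1 : u x - m = ∫ y in (0 : ℝ)..1, (u x - u y) := by
      rw [intervalIntegral.integral_sub (by simp) (hu.intervalIntegrable _ _)]
      simp [hm]
    have h2 := sq_intervalIntegral_le (zero_le_one' ℝ) (h := fun y => u x - u y) (by fun_prop)
    have h3 : ∫ y in (0 : ℝ)..1, (u x - u y) ^ 2 ≤ ∫ _ in (0 : ℝ)..1, D :=
      intervalIntegral.integral_mono_on zero_le_one
        (Continuous.intervalIntegrable (by fun_prop) _ _) (by simp)
        fun y hy => sq_sub_le_integral_sq_deriv hu' hd hx hy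
    rw [h1]
    simp only [intervalIntegral.integral_const, sub_zero, one_smul, one_mul] at h2 h3
    exact h2.trans h3
  have h4 : ∫ x in (0 : ℝ)..1, (u x - m) ^ 2 ≤ ∫ _ in (0 : ℝ)..1, D :=
    intervalIntegral.integral_mono_on zero_le_one
      (Continuous.intervalIntegrable (by fun_prop) _ _) (by simp) hpt
  have h5 : ∫ x in (0 : ℝ)..1, (u x - m) ^ 2 = (∫ x in (0 : ℝ)..1, u x ^ 2) - m ^ 2 := by
    have : ∀ x, (u x - m) ^ 2 = u x ^ 2 - 2 * m * u x + m ^ 2 := fun x => by ring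
    simp only [this]
    rw [intervalIntegral.integral_add, intervalIntegral.integral_sub,
      intervalIntegral.integral_const_mul, intervalIntegral.integral_const, ← hm, smul_eq_mul]
    · ring
    all_goals exact Continuous.intervalIntegrable (by fun_prop) _ _
  simp only [intervalIntegral.integral_const, sub_zero, one_smul] at h4
  linarith

/-- Poincaré inequality on the unit square, for functions of zero mean. -/
lemma poincare_unitSq {g g₁ g₂ : V2 → ℝ} (hg : Continuous g) (hg₁ : Continuous g₁)
    (hg₂ : Continuous g₂) (hd₁ : ∀ x y, HasDerivAt (fun z => g (z, y)) (g₁ (x, y)) x)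
    (hd₂ : ∀ x y, HasDerivAt (fun z => g (x, z)) (g₂ (x, y)) y) (h0 : intT2 g = 0) :
    intT2 (fun x => g x ^ 2) ≤ intT2 (fun x => g₁ x ^ 2) + intT2 (fun x => g₂ x ^ 2) := by
  set m : ℝ → ℝ := fun y => ∫ x in (0 : ℝ)..1, g (x, y) with hm
  set m' : ℝ → ℝ := fun y => ∫ x in (0 : ℝ)..1, g₂ (x, y) with hm'
  have hmd : ∀ y, HasDerivAt m (m' y) y := fun y =>
    hasDerivAt_intervalIntegral_of_continuous zero_le_one (F := fun y x => g (x, y))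
      (F' := fun y x => g₂ (x, y)) (by simp only [Function.uncurry_def]; fun_prop)
      (by simp only [Function.uncurry_def]; fun_prop) (fun y x => hd₂ x y) y
  have hmc' : Continuous m' :=
    continuous_intervalIntegral_param (F := fun y x => g₂ (x, y))
      (by simp only [Function.uncurry_def]; fun_prop) 0 1
  have hmc : Continuous m := continuous_iff_continuousAt.2 fun x => (hmd x).continuousAt
  have hc : ∀ {k : V2 → ℝ}, Continuous k → Continuous fun y => ∫ x in (0 : ℝ)..1, k (x, y) ^ 2 :=
    fun {k} hk => continuous_intervalIntegral_param (F := fun y x => k (x, y) ^ 2)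
      (by simp only [Function.uncurry_def]; fun_prop) 0 1
  have hmean : ∫ y in (0 : ℝ)..1, m y = 0 := by
    rw [intT2_eq_iterated_swap hg] at h0
    exact h0
  have hx : intT2 (fun x => g x ^ 2) ≤ (∫ y in (0 : ℝ)..1, m y ^ 2) + intT2 (fun x => g₁ x ^ 2) := by
    rw [intT2_eq_iterated_swap (by fun_prop), intT2_eq_iterated_swap (by fun_prop),
      ← intervalIntegral.integral_add (Continuous.intervalIntegrable (by fun_prop) _ _)
        ((hc hg₁).intervalIntegrable _ _)]
    exact intervalIntegral.integral_mono_on zero_le_one ((hc hg).intervalIntegrable _ _)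
      (((hmc.pow 2).add (hc hg₁)).intervalIntegrable _ _) fun y _ =>
        poincare_interval (by fun_prop) fun x => hd₁ x y
  have hy := poincare_interval hmc' hmd
  have hy' : ∫ y in (0 : ℝ)..1, m' y ^ 2 ≤ intT2 (fun x => g₂ x ^ 2) := by
    rw [intT2_eq_iterated_swap (by fun_prop)]
    refine intervalIntegral.integral_mono_on zero_le_one
      (Continuous.intervalIntegrable (by fun_prop) _ _) ((hc hg₂).intervalIntegrable _ _)
      fun y _ => ?_
    simpa using sq_intervalIntegral_le (zero_le_one' ℝ) (h := fun x => g₂ (x, y)) (by fun_prop)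
  rw [hmean] at hy
  linarith

/-- The time derivative of a scalar field on space-time. -/
def partialT (g : ℝ × V2 → ℝ) (p : ℝ × V2) : ℝ := fderiv ℝ g p ((1 : ℝ), ((0 : ℝ), (0 : ℝ)))

/-- The derivative of a scalar field on space-time in the first space variable. -/
def partialX₁ (g : ℝ × V2 → ℝ) (p : ℝ × V2) : ℝ := fderiv ℝ g p ((0 : ℝ), ((1 : ℝ), (0 : ℝ)))

/-- The derivative of a scalar field on space-time in the second space variable. -/
def partialX₂ (g : ℝ × V2 → ℝ) (p : ℝ × V2) : ℝ := fderiv ℝ g p ((0 : ℝ), ((0 : ℝ), (1 : ℝ)))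

section partials

variable {g : ℝ × V2 → ℝ}

lemma continuous_partialT (hg : ContDiff ℝ 1 g) : Continuous (partialT g) :=
  (hg.continuous_fderiv one_ne_zero).clm_apply continuous_const

lemma continuous_partialX₁ (hg : ContDiff ℝ 1 g) : Continuous (partialX₁ g) :=
  (hg.continuous_fderiv one_ne_zero).clm_apply continuous_const

lemma continuous_partialX₂ (hg : ContDiff ℝ 1 g) : Continuous (partialX₂ g) :=
  (hg.continuous_fderiv one_ne_zero).clm_apply continuous_const

lemma hasDerivAt_partialT (hg : ContDiff ℝ 1 g) (t : ℝ) (x : V2) :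
    HasDerivAt (fun s => g (s, x)) (partialT g (t, x)) t :=
  (hg.differentiable one_ne_zero (t, x)).hasFDerivAt.comp_hasDerivAt t
    ((hasDerivAt_id t).prodMk (hasDerivAt_const t x))

lemma hasDerivAt_partialX₁ (hg : ContDiff ℝ 1 g) (t x y : ℝ) :
    HasDerivAt (fun z => g (t, (z, y))) (partialX₁ g (t, (x, y))) x :=
  (hg.differentiable one_ne_zero (t, (x, y))).hasFDerivAt.comp_hasDerivAt x
    ((hasDerivAt_const x t).prodMk ((hasDerivAt_id x).prodMk (hasDerivAt_const x y)))

lemma hasDerivAt_partialX₂ (hg : ContDiff ℝ 1 g) (t x y : ℝ) :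
    HasDerivAt (fun z => g (t, (x, z))) (partialX₂ g (t, (x, y))) y :=
  (hg.differentiable one_ne_zero (t, (x, y))).hasFDerivAt.comp_hasDerivAt y
    ((hasDerivAt_const y t).prodMk ((hasDerivAt_const y x).prodMk (hasDerivAt_id y)))

end partials

/-- A scalar form of the homogeneous Maxwell system for the fields `E = (e, f)` and `b`. -/
structure ScalarMaxwell (c T : ℝ) (b e f : ℝ × V2 → ℝ) : Prop where
  contDiff_b : ContDiff ℝ 1 b
  contDiff_e : ContDiff ℝ 1 e
  contDiff_f : ContDiff ℝ 1 f
  per_b : ∀ t, Zper fun x => b (t, x)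
  per_e : ∀ t, Zper fun x => e (t, x)
  per_f : ∀ t, Zper fun x => f (t, x)
  faraday : ∀ t ∈ Set.Icc (0 : ℝ) T, ∀ x : V2,
    partialT b (t, x) + c * (partialX₁ f (t, x) - partialX₂ e (t, x)) = 0
  ampere₁ : ∀ t ∈ Set.Icc (0 : ℝ) T, ∀ x : V2, partialT e (t, x) + c * partialX₂ b (t, x) = 0
  ampere₂ : ∀ t ∈ Set.Icc (0 : ℝ) T, ∀ x : V2, partialT f (t, x) - c * partialX₁ b (t, x) = 0

lemma Zper.mul {f g : V2 → ℝ} (hf : Zper f) (hg : Zper g) : Zper fun x => f x * g x :=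
  fun x m n => by simp only [hf x m n, hg x m n]

lemma eq_of_hasDerivAt_zero {G : ℝ → ℝ} {a b : ℝ} (h : ∀ t ∈ Set.Icc a b, HasDerivAt G 0 t)
    {t : ℝ} (ht : t ∈ Set.Icc a b) : G t = G a :=
  constant_of_has_deriv_right_zero (fun s hs => (h s hs).continuousAt.continuousWithinAt)
    (fun s hs => (h s (Set.Ico_subset_Icc_self hs)).hasDerivWithinAt) t ht

namespace ScalarMaxwell

variable {c T : ℝ} {b e f : ℝ × V2 → ℝ}

/-- The polarized weak form of the equations, relating two times. -/
lemma intT2_cross_eq_zero (h : ScalarMaxwell c T b e f) {s t : ℝ} (hs : s ∈ Set.Icc 0 T)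
    (ht : t ∈ Set.Icc 0 T) :
    intT2 (fun x => b (s, x) * partialT b (t, x)
      - (partialT e (s, x) * e (t, x) + partialT f (s, x) * f (t, x))) = 0 := by
  have hb := h.contDiff_b.continuous
  have he := h.contDiff_e.continuous
  have hf := h.contDiff_f.continuous
  have hb₁ := continuous_partialX₁ h.contDiff_b
  have hb₂ := continuous_partialX₂ h.contDiff_b
  have hf₁ := continuous_partialX₁ h.contDiff_f
  have he₂ := continuous_partialX₂ h.contDiff_e
  have k₁ := intT2_partial_fst_eq_zero ((h.per_b s).mul (h.per_f t))
    (g' := fun x => partialX₁ b (s, x) * f (t, x) + b (s, x) * partialX₁ f (t, x)) (by fun_prop)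
    fun x y => (hasDerivAt_partialX₁ h.contDiff_b s x y).mul
      (hasDerivAt_partialX₁ h.contDiff_f t x y)
  have k₂ := intT2_partial_snd_eq_zero ((h.per_b s).mul (h.per_e t))
    (g' := fun x => partialX₂ b (s, x) * e (t, x) + b (s, x) * partialX₂ e (t, x)) (by fun_prop)
    fun x y => (hasDerivAt_partialX₂ h.contDiff_b s x y).mul
      (hasDerivAt_partialX₂ h.contDiff_e t x y)
  have hpt : ∀ x, b (s, x) * partialT b (t, x)
      - (partialT e (s, x) * e (t, x) + partialT f (s, x) * f (t, x))
      = c * ((partialX₂ b (s, x) * e (t, x) + b (s, x) * partialX₂ e (t, x))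
        - (partialX₁ b (s, x) * f (t, x) + b (s, x) * partialX₁ f (t, x))) := fun x => by
    linear_combination b (s, x) * h.faraday t ht x - e (t, x) * h.ampere₁ s hs x
      - f (t, x) * h.ampere₂ s hs x
  simp only [hpt]
  rw [intT2_const_mul, intT2_sub (by fun_prop) (by fun_prop), k₁, k₂, sub_zero, mul_zero]

/-- The difference of magnetic and electric energies is conserved. -/
lemma energy_diff_eq (h : ScalarMaxwell c T b e f) {t : ℝ} (ht : t ∈ Set.Icc 0 T) :
    intT2 (fun x => b (t, x) ^ 2 - (e (t, x) ^ 2 + f (t, x) ^ 2))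
      = intT2 (fun x => b (0, x) ^ 2 - (e (0, x) ^ 2 + f (0, x) ^ 2)) := by
  have hb := h.contDiff_b.continuous
  have he := h.contDiff_e.continuous
  have hf := h.contDiff_f.continuous
  have hb₀ := continuous_partialT h.contDiff_b
  have he₀ := continuous_partialT h.contDiff_e
  have hf₀ := continuous_partialT h.contDiff_f
  refine eq_of_hasDerivAt_zero
    (G := fun t => intT2 (fun x => b (t, x) ^ 2 - (e (t, x) ^ 2 + f (t, x) ^ 2)))
    (fun s hs => ?_) ht
  have hd := hasDerivAt_setIntegral_of_continuous (μ := volume) isCompact_unitSq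
    (F := fun t x => b (t, x) ^ 2 - (e (t, x) ^ 2 + f (t, x) ^ 2))
    (F' := fun t x => 2 * (b (t, x) * partialT b (t, x)
      - (partialT e (t, x) * e (t, x) + partialT f (t, x) * f (t, x))))
    (by simp only [Function.uncurry_def]; fun_prop) (by simp only [Function.uncurry_def]; fun_prop)
    (fun t x => by
      refine HasDerivAt.congr_deriv (((hasDerivAt_partialT h.contDiff_b t x).pow 2).sub
        (((hasDerivAt_partialT h.contDiff_e t x).pow 2).add
          ((hasDerivAt_partialT h.contDiff_f t x).pow 2))) ?_
      push_cast
      ring) s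
  refine hd.congr_deriv ?_
  have := h.intT2_cross_eq_zero hs hs
  rw [integral_const_mul]
  exact mul_eq_zero_of_right _ this

lemma intT2_b_eq (h : ScalarMaxwell c T b e f) {t : ℝ} (ht : t ∈ Set.Icc 0 T) :
    intT2 (fun x => b (t, x)) = intT2 fun x => b (0, x) := by
  have hf₁ := continuous_partialX₁ h.contDiff_f
  have he₂ := continuous_partialX₂ h.contDiff_e
  refine eq_of_hasDerivAt_zero (G := fun t => intT2 fun x => b (t, x)) (fun s hs => ?_) ht
  refine (hasDerivAt_setIntegral_of_continuous (μ := volume) isCompact_unitSq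
    (F := fun t x => b (t, x)) (F' := fun t x => partialT b (t, x)) h.contDiff_b.continuous
    (continuous_partialT h.contDiff_b) (hasDerivAt_partialT h.contDiff_b) s).congr_deriv ?_
  have k₁ := intT2_partial_fst_eq_zero (h.per_f s) (g' := fun x => partialX₁ f (s, x))
    (by fun_prop) (hasDerivAt_partialX₁ h.contDiff_f s)
  have k₂ := intT2_partial_snd_eq_zero (h.per_e s) (g' := fun x => partialX₂ e (s, x))
    (by fun_prop) (hasDerivAt_partialX₂ h.contDiff_e s)
  have hpt : ∀ x, partialT b (s, x) = -c * (partialX₁ f (s, x) - partialX₂ e (s, x)) := fun x => by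
    linear_combination h.faraday s hs x
  change intT2 (fun x => partialT b (s, x)) = 0
  simp only [hpt]
  rw [intT2_const_mul, intT2_sub (by fun_prop) (by fun_prop), k₁, k₂, sub_zero, mul_zero]

/-- The conserved energy difference is bounded by two-time correlations: the sum of the two
correlations only depends on `t + s`. -/
lemma energy_diff_le_correlation (h : ScalarMaxwell c T b e f) {s t : ℝ} (hs : s ∈ Set.Icc 0 T)
    (ht : t ∈ Set.Icc 0 T) :
    intT2 (fun x => b (0, x) ^ 2 - (e (0, x) ^ 2 + f (0, x) ^ 2))
      ≤ intT2 (fun x => b (t, x) * b (s, x) + (e (t, x) * e (s, x) + f (t, x) * f (s, x))) := by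
  have hb := h.contDiff_b.continuous
  have he := h.contDiff_e.continuous
  have hf := h.contDiff_f.continuous
  have hb₀ := continuous_partialT h.contDiff_b
  have he₀ := continuous_partialT h.contDiff_e
  have hf₀ := continuous_partialT h.contDiff_f
  set m := (t + s) / 2 with hm
  set k := (t - s) / 2 with hk
  have hmem : m ∈ Set.Icc 0 T := ⟨by linarith [hs.1, ht.1], by linarith [hs.2, ht.2]⟩
  have hplus : ∀ g : ℝ × V2 → ℝ, ContDiff ℝ 1 g → ∀ τ x,
      HasDerivAt (fun τ => g (m + τ * k, x)) (k * partialT g (m + τ * k, x)) τ := by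
    intro g hg τ x
    refine ((hasDerivAt_partialT hg (m + τ * k) x).comp τ
      (((hasDerivAt_id τ).mul_const k).const_add m)).congr_deriv ?_
    ring
  have hminus : ∀ g : ℝ × V2 → ℝ, ContDiff ℝ 1 g → ∀ τ x,
      HasDerivAt (fun τ => g (m - τ * k, x)) (-k * partialT g (m - τ * k, x)) τ := by
    intro g hg τ x
    refine ((hasDerivAt_partialT hg (m - τ * k) x).comp τ
      (((hasDerivAt_id τ).mul_const k).const_sub m)).congr_deriv ?_
    ring
  let G : ℝ → ℝ := fun τ => intT2 fun x => b (m + τ * k, x) * b (m - τ * k, x)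
    + (e (m + τ * k, x) * e (m - τ * k, x) + f (m + τ * k, x) * f (m - τ * k, x))
  have hG : ∀ τ ∈ Set.Icc (0 : ℝ) 1, HasDerivAt G 0 τ := by
    intro τ hτ
    have hp : m + τ * k ∈ Set.Icc 0 T := by
      constructor
      · nlinarith [hs.1, ht.1, hτ.1, hτ.2]
      · nlinarith [hs.2, ht.2, hτ.1, hτ.2]
    have hq : m - τ * k ∈ Set.Icc 0 T := by
      constructor
      · nlinarith [hs.1, ht.1, hτ.1, hτ.2]
      · nlinarith [hs.2, ht.2, hτ.1, hτ.2]
    have hd := hasDerivAt_setIntegral_of_continuous (μ := volume) isCompact_unitSq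
      (F := fun τ x => b (m + τ * k, x) * b (m - τ * k, x)
        + (e (m + τ * k, x) * e (m - τ * k, x) + f (m + τ * k, x) * f (m - τ * k, x)))
      (F' := fun τ x => k * ((b (m - τ * k, x) * partialT b (m + τ * k, x)
          - (partialT e (m - τ * k, x) * e (m + τ * k, x)
            + partialT f (m - τ * k, x) * f (m + τ * k, x)))
        - (b (m + τ * k, x) * partialT b (m - τ * k, x)
          - (partialT e (m + τ * k, x) * e (m - τ * k, x)
            + partialT f (m + τ * k, x) * f (m - τ * k, x)))))
      (by simp only [Function.uncurry_def]; fun_prop)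
      (by simp only [Function.uncurry_def]; fun_prop)
      (fun τ x => by
        refine HasDerivAt.congr_deriv
          (((hplus b h.contDiff_b τ x).mul (hminus b h.contDiff_b τ x)).add
          (((hplus e h.contDiff_e τ x).mul (hminus e h.contDiff_e τ x)).add
            ((hplus f h.contDiff_f τ x).mul (hminus f h.contDiff_f τ x)))) ?_
        ring) τ
    refine hd.congr_deriv ?_
    rw [integral_const_mul]
    refine mul_eq_zero_of_right _ ((intT2_sub (by fun_prop) (by fun_prop)).trans ?_)
    rw [h.intT2_cross_eq_zero hq hp, h.intT2_cross_eq_zero hp hq, sub_zero]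
  have h01 := eq_of_hasDerivAt_zero hG (Set.right_mem_Icc.2 zero_le_one)
  have e1 : m + 1 * k = t := by rw [hm, hk]; ring
  have e2 : m - 1 * k = s := by rw [hm, hk]; ring
  simp only [G, e1, e2, zero_mul, add_zero, sub_zero] at h01
  rw [h01, ← h.energy_diff_eq hmem]
  refine intT2_mono (by fun_prop) (by fun_prop) fun x => ?_
  nlinarith [sq_nonneg (e (m, x)), sq_nonneg (f (m, x))]

end ScalarMaxwell

/-- The time average of a field against a weight. -/
def timeAverage (T : ℝ) (φ : ℝ → ℝ) (g : ℝ × V2 → ℝ) (x : V2) : ℝ :=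
  ∫ t in (0 : ℝ)..T, φ t * g (t, x)

section timeAverage

variable {T : ℝ} {φ : ℝ → ℝ} {g : ℝ × V2 → ℝ}

lemma continuous_timeAverage (hφ : Continuous φ) (hg : Continuous g) :
    Continuous (timeAverage T φ g) :=
  continuous_intervalIntegral_param (F := fun x t => φ t * g (t, x))
    (by simp only [Function.uncurry_def]; fun_prop) 0 T

lemma intT2_timeAverage (hφ : Continuous φ) (hg : Continuous g) :
    intT2 (timeAverage T φ g) = ∫ t in (0 : ℝ)..T, φ t * intT2 fun x => g (t, x) := by
  have := intervalIntegral_intT2_swap (a := 0) (b := T) (F := fun t x => φ t * g (t, x))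
    (by simp only [Function.uncurry_def]; fun_prop)
  simp only [intT2_const_mul] at this
  exact this.symm

lemma intT2_sq_timeAverage_le {M : ℝ} (hT : 0 ≤ T) (hφ : Continuous φ) (hg : Continuous g)
    (hM : ∀ t ∈ Set.Icc 0 T, φ t ^ 2 ≤ M) :
    intT2 (fun x => timeAverage T φ g x ^ 2)
      ≤ T * M * ∫ t in (0 : ℝ)..T, intT2 fun x => g (t, x) ^ 2 := by
  rw [intervalIntegral_intT2_swap (F := fun t x => g (t, x) ^ 2)
    (by simp only [Function.uncurry_def]; fun_prop), ← intT2_const_mul]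
  have hc := continuous_timeAverage (T := T) hφ hg
  have hc' : Continuous fun x => ∫ t in (0 : ℝ)..T, g (t, x) ^ 2 :=
    continuous_intervalIntegral_param (F := fun x t => g (t, x) ^ 2)
      (by simp only [Function.uncurry_def]; fun_prop) 0 T
  exact intT2_mono (by fun_prop) (by fun_prop) fun x =>
    sq_intervalIntegral_mul_le hT hφ (h := fun t => g (t, x)) (by fun_prop) hM

lemma hasDerivAt_timeAverage_fst (hT : 0 ≤ T) (hφ : Continuous φ) (hg : ContDiff ℝ 1 g) (x y : ℝ) :
    HasDerivAt (fun z => timeAverage T φ g (z, y)) (timeAverage T φ (partialX₁ g) (x, y)) x := by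
  have hc := hg.continuous
  have hc' := continuous_partialX₁ hg
  exact hasDerivAt_intervalIntegral_of_continuous hT (F := fun z t => φ t * g (t, (z, y)))
    (F' := fun z t => φ t * partialX₁ g (t, (z, y)))
    (by simp only [Function.uncurry_def]; fun_prop) (by simp only [Function.uncurry_def]; fun_prop)
    (fun z t => (hasDerivAt_partialX₁ hg t z y).const_mul (φ t)) x

lemma hasDerivAt_timeAverage_snd (hT : 0 ≤ T) (hφ : Continuous φ) (hg : ContDiff ℝ 1 g) (x y : ℝ) :
    HasDerivAt (fun z => timeAverage T φ g (x, z)) (timeAverage T φ (partialX₂ g) (x, y)) y := by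
  have hc := hg.continuous
  have hc' := continuous_partialX₂ hg
  exact hasDerivAt_intervalIntegral_of_continuous hT (F := fun z t => φ t * g (t, (x, z)))
    (F' := fun z t => φ t * partialX₂ g (t, (x, z)))
    (by simp only [Function.uncurry_def]; fun_prop) (by simp only [Function.uncurry_def]; fun_prop)
    (fun z t => (hasDerivAt_partialX₂ hg t x z).const_mul (φ t)) y

/-- Integration by parts in time against a weight vanishing at both ends. -/
lemma timeAverage_partialT {φ' : ℝ → ℝ} (hφ' : Continuous φ')
    (hd : ∀ t, HasDerivAt φ (φ' t) t) (h0 : φ 0 = 0) (h1 : φ T = 0) (hg : ContDiff ℝ 1 g) (x : V2) :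
    timeAverage T φ (partialT g) x = -timeAverage T φ' g x := by
  have hc := continuous_partialT hg
  have := intervalIntegral.integral_mul_deriv_eq_deriv_mul (a := 0) (b := T)
    (fun t _ => hd t) (fun t _ => hasDerivAt_partialT hg t x)
    (hφ'.intervalIntegrable _ _) (Continuous.intervalIntegrable (by fun_prop) _ _)
  rw [timeAverage, this, h0, h1, timeAverage]
  ring

lemma mul_integral_le_intT2_timeAverage {b e f : ℝ × V2 → ℝ} {p q r : V2 → ℝ} {k : ℝ} (hT : 0 ≤ T)
    (hφ : Continuous φ) (hφ0 : ∀ t ∈ Set.Icc 0 T, 0 ≤ φ t)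
    (hb : Continuous b) (he : Continuous e) (hf : Continuous f)
    (hp : Continuous p) (hq : Continuous q) (hr : Continuous r)
    (hk : ∀ t ∈ Set.Icc 0 T,
      k ≤ intT2 fun x => b (t, x) * p x + (e (t, x) * q x + f (t, x) * r x)) :
    k * ∫ t in (0 : ℝ)..T, φ t
      ≤ intT2 fun x => timeAverage T φ b x * p x
        + (timeAverage T φ e x * q x + timeAverage T φ f x * r x) := by
  have hg : Continuous fun z : ℝ × V2 => b z * p z.2 + (e z * q z.2 + f z * r z.2) := by fun_prop
  have hpt : ∀ x, timeAverage T φ b x * p x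
      + (timeAverage T φ e x * q x + timeAverage T φ f x * r x)
      = timeAverage T φ (fun z => b z * p z.2 + (e z * q z.2 + f z * r z.2)) x := by
    intro x
    simp only [timeAverage, mul_add, ← intervalIntegral.integral_mul_const, ← mul_assoc]
    rw [intervalIntegral.integral_add, intervalIntegral.integral_add]
    all_goals exact Continuous.intervalIntegrable (by fun_prop) _ _
  simp only [hpt]
  have hI : Continuous fun t => intT2 fun x => b (t, x) * p x + (e (t, x) * q x + f (t, x) * r x) :=
    continuous_intT2 (by simp only [Function.uncurry_def]; fun_prop)
  rw [intT2_timeAverage hφ hg, mul_comm, ← intervalIntegral.integral_mul_const]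
  exact intervalIntegral.integral_mono_on hT (Continuous.intervalIntegrable (by fun_prop) _ _)
    ((hφ.mul hI).intervalIntegrable _ _)
    fun t ht => mul_le_mul_of_nonneg_left (hk t ht) (hφ0 t ht)

end timeAverage

namespace ScalarMaxwell

variable {c T : ℝ} {b e f : ℝ × V2 → ℝ}

/-- The Poincaré inequality turns the Ampère equations into control of time averages of `b`. -/
lemma intT2_sq_timeAverage_b_le (h : ScalarMaxwell c T b e f) (hc : 0 < c) (hT : 0 ≤ T)
    (hmean : intT2 (fun x => b (0, x)) = 0) {φ φ' : ℝ → ℝ} (hφ' : Continuous φ')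
    (hd : ∀ t, HasDerivAt φ (φ' t) t) (h0 : φ 0 = 0) (h1 : φ T = 0) :
    intT2 (fun x => timeAverage T φ b x ^ 2)
      ≤ (1 / c) ^ 2 * (intT2 (fun x => timeAverage T φ' e x ^ 2)
        + intT2 (fun x => timeAverage T φ' f x ^ 2)) := by
  have hφ : Continuous φ := continuous_iff_continuousAt.2 fun t => (hd t).continuousAt
  have hb := h.contDiff_b.continuous
  have h₁ : ∀ x, timeAverage T φ (partialX₁ b) x = -(1 / c) * timeAverage T φ' f x := by
    intro x
    have hpt : timeAverage T φ (partialX₁ b) x = (1 / c) * timeAverage T φ (partialT f) x := by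
      rw [timeAverage, timeAverage, ← intervalIntegral.integral_const_mul]
      refine intervalIntegral.integral_congr fun t ht => ?_
      rw [Set.uIcc_of_le hT] at ht
      have := h.ampere₂ t ht x
      have : partialT f (t, x) = c * partialX₁ b (t, x) := by linarith
      simp only [this]
      field_simp
    rw [hpt, timeAverage_partialT hφ' hd h0 h1 h.contDiff_f]
    ring
  have h₂ : ∀ x, timeAverage T φ (partialX₂ b) x = 1 / c * timeAverage T φ' e x := by
    intro x
    have hpt : timeAverage T φ (partialX₂ b) x = -(1 / c) * timeAverage T φ (partialT e) x := by
      rw [timeAverage, timeAverage, ← intervalIntegral.integral_const_mul]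
      refine intervalIntegral.integral_congr fun t ht => ?_
      rw [Set.uIcc_of_le hT] at ht
      have := h.ampere₁ t ht x
      have : partialT e (t, x) = -c * partialX₂ b (t, x) := by linarith
      simp only [this]
      field_simp
    rw [hpt, timeAverage_partialT hφ' hd h0 h1 h.contDiff_e]
    ring
  have hz : intT2 (timeAverage T φ b) = 0 := by
    rw [intT2_timeAverage hφ hb]
    refine (intervalIntegral.integral_congr fun t ht => ?_).trans intervalIntegral.integral_zero
    rw [Set.uIcc_of_le hT] at ht
    simp only [h.intT2_b_eq ht, hmean, mul_zero]
  have := poincare_unitSq (continuous_timeAverage (T := T) hφ hb)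
    (continuous_timeAverage hφ (continuous_partialX₁ h.contDiff_b))
    (continuous_timeAverage hφ (continuous_partialX₂ h.contDiff_b))
    (hasDerivAt_timeAverage_fst hT hφ h.contDiff_b)
    (hasDerivAt_timeAverage_snd hT hφ h.contDiff_b) hz
  simp only [h₁, h₂, mul_pow, intT2_const_mul, neg_sq] at this
  linarith

lemma magnetic_le_electric (h : ScalarMaxwell c T b e f) (hc : 0 < c) (hT : 0 < T)
    (hmean : intT2 (fun x => b (0, x)) = 0) :
    (∫ t in (0 : ℝ)..T, intT2 fun x => b (t, x) ^ 2)
      ≤ (36 * (1 + 1 / (T * c) ^ 2) + 1)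
        * ∫ t in (0 : ℝ)..T, intT2 fun x => e (t, x) ^ 2 + f (t, x) ^ 2 := by
  have hb := h.contDiff_b.continuous
  have he := h.contDiff_e.continuous
  have hf := h.contDiff_f.continuous
  set K := intT2 (fun x => b (0, x) ^ 2 - (e (0, x) ^ 2 + f (0, x) ^ 2)) with hK
  set Q := ∫ t in (0 : ℝ)..T, intT2 fun x => e (t, x) ^ 2 + f (t, x) ^ 2 with hQ
  have hIe : Continuous fun t => intT2 fun x => e (t, x) ^ 2 :=
    continuous_intT2 (by simp only [Function.uncurry_def]; fun_prop)
  have hIf : Continuous fun t => intT2 fun x => f (t, x) ^ 2 :=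
    continuous_intT2 (by simp only [Function.uncurry_def]; fun_prop)
  have hIef : Continuous fun t => intT2 fun x => e (t, x) ^ 2 + f (t, x) ^ 2 :=
    continuous_intT2 (by simp only [Function.uncurry_def]; fun_prop)
  have hQsplit : Q = (∫ t in (0 : ℝ)..T, intT2 fun x => e (t, x) ^ 2)
      + ∫ t in (0 : ℝ)..T, intT2 fun x => f (t, x) ^ 2 := by
    rw [hQ, ← intervalIntegral.integral_add (hIe.intervalIntegrable _ _)
      (hIf.intervalIntegrable _ _)]
    exact intervalIntegral.integral_congr fun t _ => intT2_add (by fun_prop) (by fun_prop)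
  have hB : (∫ t in (0 : ℝ)..T, intT2 fun x => b (t, x) ^ 2) = T * K + Q := by
    have hconst : T * K = ∫ _ in (0 : ℝ)..T, K := by simp
    rw [hconst, hQ, ← intervalIntegral.integral_add intervalIntegrable_const
      (hIef.intervalIntegrable _ _)]
    refine intervalIntegral.integral_congr fun t ht => ?_
    rw [Set.uIcc_of_le hT.le] at ht
    rw [hK, ← h.energy_diff_eq ht, ← intT2_add (by fun_prop) (by fun_prop)]
    simp only [sub_add_cancel]
  set φ : ℝ → ℝ := fun t => t * (T - t) with hφdef
  have hφ : Continuous φ := by fun_prop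
  have hφ' : Continuous fun t : ℝ => T - 2 * t := by fun_prop
  have hd : ∀ t, HasDerivAt φ (T - 2 * t) t := fun t =>
    ((hasDerivAt_id t).mul ((hasDerivAt_id t).const_sub T)).congr_deriv (by simp; ring)
  have hS : ∫ t in (0 : ℝ)..T, φ t = T ^ 3 / 6 := by
    have : ∀ t, φ t = T * t - t ^ 2 := fun t => by simp only [hφdef]; ring
    simp only [this]
    rw [intervalIntegral.integral_sub (Continuous.intervalIntegrable (by fun_prop) _ _)
      (Continuous.intervalIntegrable (by fun_prop) _ _), intervalIntegral.integral_const_mul,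
      integral_id, integral_pow]
    norm_num
    ring
  have hφ0 : ∀ t ∈ Set.Icc 0 T, 0 ≤ φ t := fun t ht => mul_nonneg ht.1 (sub_nonneg.2 ht.2)
  have hM : ∀ t ∈ Set.Icc 0 T, φ t ^ 2 ≤ T ^ 4 := by
    intro t ht
    have : φ t ≤ T ^ 2 := by
      simp only [hφdef]
      nlinarith [ht.1, ht.2]
    calc φ t ^ 2 ≤ (T ^ 2) ^ 2 := pow_le_pow_left₀ (hφ0 t ht) this 2
      _ = T ^ 4 := by ring
  have hM' : ∀ t ∈ Set.Icc 0 T, (T - 2 * t) ^ 2 ≤ T ^ 2 := by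
    intro t ht
    nlinarith [mul_nonneg ht.1 (sub_nonneg.2 ht.2)]
  have hcb := continuous_timeAverage (T := T) hφ hb
  have hce := continuous_timeAverage (T := T) hφ he
  have hcf := continuous_timeAverage (T := T) hφ hf
  have step : ∀ s ∈ Set.Icc 0 T, K * (T ^ 3 / 6) ≤ intT2 fun x =>
      b (s, x) * timeAverage T φ b x
        + (e (s, x) * timeAverage T φ e x + f (s, x) * timeAverage T φ f x) := by
    intro s hs
    have := mul_integral_le_intT2_timeAverage (p := fun x => b (s, x)) (q := fun x => e (s, x))
      (r := fun x => f (s, x)) hT.le hφ hφ0 hb he hf (by fun_prop) (by fun_prop) (by fun_prop)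
      fun t ht => h.energy_diff_le_correlation hs ht
    rw [hS] at this
    simpa only [mul_comm] using this
  have key := mul_integral_le_intT2_timeAverage hT.le hφ hφ0 hb he hf hcb hce hcf step
  simp only [← sq] at key
  rw [hS, intT2_add (by fun_prop) (by fun_prop), intT2_add (by fun_prop) (by fun_prop)] at key
  have pb := h.intT2_sq_timeAverage_b_le hc hT.le hmean hφ' hd (by simp [hφdef]) (by simp [hφdef])
  have qe := intT2_sq_timeAverage_le hT.le hφ' he hM'
  have qf := intT2_sq_timeAverage_le hT.le hφ' hf hM'
  have re := intT2_sq_timeAverage_le hT.le hφ he hM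
  have rf := intT2_sq_timeAverage_le hT.le hφ hf hM
  have pb' : intT2 (fun x => timeAverage T φ b x ^ 2) ≤ (1 / c) ^ 2 * (T * T ^ 2 * Q) := by
    refine pb.trans (mul_le_mul_of_nonneg_left ?_ (sq_nonneg _))
    rw [hQsplit, mul_add]
    exact add_le_add qe qf
  have hfin : K * (T ^ 3 / 6) * (T ^ 3 / 6) ≤ (1 / c) ^ 2 * (T * T ^ 2 * Q) + T * T ^ 4 * Q := by
    rw [hQsplit] at pb' ⊢
    linarith
  have hTK : T * K ≤ 36 * (1 + 1 / (T * c) ^ 2) * Q := by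
    have hT5 : 0 < T ^ 5 / 36 := by positivity
    refine le_of_mul_le_mul_left ?_ hT5
    calc T ^ 5 / 36 * (T * K) = K * (T ^ 3 / 6) * (T ^ 3 / 6) := by ring
      _ ≤ _ := hfin
      _ = T ^ 5 / 36 * (36 * (1 + 1 / (T * c) ^ 2) * Q) := by
        field_simp
        ring
  rw [hB]
  linarith

end ScalarMaxwell

lemma IsHomMaxwellSolution.scalarMaxwell {c T : ℝ} {E : ℝ × V2 → V2} {b : ℝ × V2 → ℝ}
    (h : IsHomMaxwellSolution c T E b) :
    ScalarMaxwell c T b (fun p => (E p).1) (fun p => (E p).2) := by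
  obtain ⟨hE, hb, perE, perb, heq⟩ := h
  have hE1 : ContDiff ℝ 1 E := hE.of_le (by exact_mod_cast le_top)
  exact
    { contDiff_b := hb.of_le (by exact_mod_cast le_top)
      contDiff_e := hE1.fst
      contDiff_f := hE1.snd
      per_b := perb
      per_e := fun t x m n => congrArg Prod.fst (perE t x m n)
      per_f := fun t x m n => congrArg Prod.snd (perE t x m n)
      faraday := fun t ht x => (heq t ht x).1
      ampere₁ := fun t ht x => (heq t ht x).2.1
      ampere₂ := fun t ht x => (heq t ht x).2.2 }

/-- **The magnetic field is controlled by the electric field for the homogeneous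
2D Maxwell equations** (for initial data with `div E(0,·) = 0` and `∫ B(0,·) = 0`). -/
theorem maxwell_B_controlled_by_E
    (c T : ℝ) (hc : 0 < c) (hT : 0 < T) :
    ∃ C₁ > (0 : ℝ),
      ∀ (E : ℝ × V2 → V2) (b : ℝ × V2 → ℝ),
        IsHomMaxwellSolution c T E b →
        (∀ x, divF (fun y => E (0, y)) x = 0) →
        intT2 (fun x => b (0, x)) = 0 →
        (∫ t in (0 : ℝ)..T, intT2 fun x => (b (t, x)) ^ 2)
          ≤ C₁ * ∫ t in (0 : ℝ)..T, intT2 fun x => (E (t, x)).1 ^ 2 + (E (t, x)).2 ^ 2 := by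
  exact ⟨36 * (1 + 1 / (T * c) ^ 2) + 1, by positivity, fun E b h _ hmean =>
    h.scalarMaxwell.magnetic_le_electric hc hT hmean⟩

end
end

section
/- Let 𝔟 ∈ ℝ, τ > 0 and M > 0. There exist M̃ > 0, smooth fields ℰ ∈ C^∞([0,τ]×𝕋²; ℝ²) and φ ∈ C^∞([0,τ]×𝕋²; ℝ) (independent of the speed of light), and c₀ > 0, satisfying: ℰ = −∇ₓφ on [0,τ]×(𝕋²∖ℋ_d); supp ℰ ⊂ (0,τ)×𝕋² (ℰ vanishes near t = 0 and t = τ); Δₓφ = 0 on [0,τ]×(𝕋²∖ℋ_d); ∫_𝒟 ∇ₓφ·n dσ = 0 for all t; such that for every c ≥ c₀ and every force F ∈ L^∞(0,τ; W^{1,∞}(𝕋²×ℝ²; ℝ²)) with ‖F‖_{L^∞} ≤ 1, the relativistic characteristics (X,V) associated with the force F + ℰ + 𝔟 v̂⊥ satisfy V(τ,0,x,v) ∈ B(0,M̃) ∖ B(0,M+1) for every (x,v) ∈ 𝕋²×B(0,M). -/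
noncomputable section

open MeasureTheory Real

/-- Spatial gradient of a time-dependent potential. -/
noncomputable def gradx (φ : ℝ × V2 → ℝ) (t : ℝ) (x : V2) : V2 :=
  (fderiv ℝ (fun y => φ (t, y)) x ((1 : ℝ), (0 : ℝ)),
   fderiv ℝ (fun y => φ (t, y)) x ((0 : ℝ), (1 : ℝ)))

/-- Spatial Laplacian of a time-dependent potential. -/
noncomputable def lapx (φ : ℝ × V2 → ℝ) (t : ℝ) (x : V2) : ℝ :=
  fderiv ℝ (fun y => fderiv ℝ (fun z => φ (t, z)) y ((1 : ℝ), (0 : ℝ))) x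
      ((1 : ℝ), (0 : ℝ)) +
    fderiv ℝ (fun y => fderiv ℝ (fun z => φ (t, z)) y ((0 : ℝ), (1 : ℝ))) x
      ((0 : ℝ), (1 : ℝ))

/-- Euclidean inner product on `ℝ²`. -/
def inner2 (a b : V2) : ℝ := a.1 * b.1 + a.2 * b.2

/-- The thickened strip `ℋ_l = ℋ + [−l,l]·n_H` around the periodized line `L`
with unit normal `nH`. -/
def stripAround (L : Set V2) (nH : V2) (l : ℝ) : Set V2 :=
  {x : V2 | ∃ y ∈ L, ∃ s : ℝ, |s| ≤ l ∧ x = y + s • nH}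

section

open Filter Topology

/-- A smooth, positive, `1`-periodic function which coincides locally with a translate of
`s ↦ exp (2πs)` at distance more than `δ` from the integers. -/
lemma exists_periodic_exp (δ : ℝ) (hδ : 0 < δ) (hδ' : δ < 1 / 2) :
    ∃ ρ : ℝ → ℝ, ContDiff ℝ (⊤ : ℕ∞) ρ ∧ (∀ (s : ℝ) (k : ℤ), ρ (s + k) = ρ s) ∧
      (∀ s, 1 ≤ ρ s) ∧
      ∀ s : ℝ, (∀ k : ℤ, δ < |s - k|) →
        ∃ k : ℤ, ρ =ᶠ[𝓝 s] fun y => Real.exp (2 * π * (y - k)) := by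
  have hπ := Real.pi_pos
  set κ : ℝ := 1 - Real.cos (2 * π * δ) with hκ
  have hκpos : 0 < κ := by
    have : Real.cos (2 * π * δ) < Real.cos 0 :=
      Real.cos_lt_cos_of_nonneg_of_le_pi le_rfl (by nlinarith) (by positivity)
    rw [Real.cos_zero] at this
    linarith
  set χ : ℝ → ℝ := fun s => Real.smoothTransition (2 * (1 - Real.cos (2 * π * s)) / κ - 1) with hχ
  have hχs : ContDiff ℝ (⊤ : ℕ∞) χ := by
    apply Real.smoothTransition.contDiff.comp
    fun_prop
  have hχper : ∀ (s : ℝ) (k : ℤ), χ (s + k) = χ s := by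
    intro s k
    have : 2 * π * (s + k) = 2 * π * s + k * (2 * π) := by ring
    simp only [hχ, this, Real.cos_add_int_mul_two_pi]
  have hfloor : ∀ s : ℝ, (∀ k : ℤ, s ≠ k) → ∀ᶠ y : ℝ in 𝓝 s, Int.fract y = y - ⌊s⌋ := by
    intro s hs
    have h1 : (⌊s⌋ : ℝ) < s := lt_of_le_of_ne (Int.floor_le s) (fun h => hs _ h.symm)
    filter_upwards [Ioo_mem_nhds h1 (Int.lt_floor_add_one s)] with y hy
    have : ⌊y⌋ = ⌊s⌋ := Int.floor_eq_iff.2 ⟨hy.1.le, hy.2⟩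
    rw [Int.fract, this]
  refine ⟨fun s => Real.exp (2 * π * (Int.fract s * χ s)), ?_, ?_, ?_, ?_⟩
  · apply Real.contDiff_exp.comp
    apply contDiff_const.mul
    rw [contDiff_iff_contDiffAt]
    intro s
    by_cases hs : ∀ k : ℤ, s ≠ k
    · have : (fun y => Int.fract y * χ y) =ᶠ[𝓝 s] fun y => (y - ⌊s⌋) * χ y := by
        filter_upwards [hfloor s hs] with y hy
        rw [hy]
      refine ContDiffAt.congr_of_eventuallyEq ?_ this
      exact (contDiffAt_id.sub contDiffAt_const).mul hχs.contDiffAt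
    · push Not at hs
      obtain ⟨k, hk⟩ := hs
      have hc : Continuous fun y : ℝ => 2 * (1 - Real.cos (2 * π * y)) / κ - 1 := by fun_prop
      have h0 : 2 * (1 - Real.cos (2 * π * s)) / κ - 1 < 0 := by
        have : Real.cos (2 * π * s) = 1 := by
          rw [hk, mul_comm, Real.cos_int_mul_two_pi]
        rw [this]; norm_num
      have : (fun y => Int.fract y * χ y) =ᶠ[𝓝 s] fun _ => 0 := by
        filter_upwards [hc.continuousAt.eventually_lt continuousAt_const h0] with y hy
        simp only [hχ, Real.smoothTransition.zero_of_nonpos hy.le, mul_zero]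
      exact contDiffAt_const.congr_of_eventuallyEq this
  · intro s k
    simp only [Int.fract_add_intCast, hχper]
  · intro s
    apply Real.one_le_exp
    have := Int.fract_nonneg s
    have := Real.smoothTransition.nonneg (2 * (1 - Real.cos (2 * π * s)) / κ - 1)
    positivity
  · intro s hs
    refine ⟨⌊s⌋, ?_⟩
    have hopen : ∀ᶠ y : ℝ in 𝓝 s, δ < y - ⌊s⌋ ∧ y - ⌊s⌋ < 1 - δ := by
      have h1 := hs ⌊s⌋
      have h2 := hs (⌊s⌋ + 1)
      rw [abs_of_nonneg (by linarith [Int.floor_le s])] at h1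
      push_cast at h2
      rw [abs_of_nonpos (by linarith [Int.lt_floor_add_one s])] at h2
      filter_upwards [Ioo_mem_nhds (show ⌊s⌋ + δ < s by linarith)
        (show s < ⌊s⌋ + 1 - δ by linarith)] with y hy
      constructor <;> linarith [hy.1, hy.2]
    filter_upwards [hopen, hfloor s fun k hk => by
      have := hs k
      rw [hk, sub_self, abs_zero] at this
      linarith] with y hy hfy
    have hcos : Real.cos (2 * π * y) ≤ Real.cos (2 * π * δ) := by
      have e : Real.cos (2 * π * y) = Real.cos (2 * π * (y - ⌊s⌋)) := by
        rw [← Real.cos_sub_int_mul_two_pi _ ⌊s⌋]; congr 1; ring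
      rw [e]
      rcases le_total (y - ⌊s⌋) (1 / 2) with h | h
      · exact Real.cos_le_cos_of_nonneg_of_le_pi (by positivity) (by nlinarith) (by nlinarith)
      · rw [← Real.cos_two_pi_sub]
        exact Real.cos_le_cos_of_nonneg_of_le_pi (by positivity) (by nlinarith) (by nlinarith)
    have : χ y = 1 := by
      apply Real.smoothTransition.one_of_one_le
      have : 2 * κ / κ ≤ 2 * (1 - Real.cos (2 * π * y)) / κ := by
        gcongr
        linarith
      rw [mul_div_assoc, div_self hκpos.ne'] at this
      linarith
    rw [this, hfy, mul_one]

/-- A line whose periodization is uniformly discrete has a primitive integral normal. -/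
lemma exists_primitive_normal (n : V2) (hn : n.1 ^ 2 + n.2 ^ 2 = 1) (r : ℝ) (hr : 0 < r)
    (hsep : ∀ i j : ℤ, i * n.1 + j * n.2 ≠ 0 → r < |i * n.1 + j * n.2|) :
    ∃ (h : ℝ) (a b i j : ℤ), r < h ∧ n = (h * a, h * b) ∧ a * i + b * j = 1 := by
  let f : ℤ × ℤ →+ ℝ :=
    { toFun := fun z => z.1 * n.1 + z.2 * n.2
      map_zero' := by simp
      map_add' := by intro x y; simp; ring }
  have hd : Disjoint (f.range : Set ℝ) (Set.Ioo 0 r) := by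
    rw [Set.disjoint_left]
    rintro _ ⟨z, rfl⟩ ⟨h1, h2⟩
    have := hsep z.1 z.2 h1.ne'
    have e : f z = z.1 * n.1 + z.2 * n.2 := rfl
    rw [← e, abs_of_pos h1] at this
    linarith
  obtain ⟨g, hg⟩ := AddSubgroup.cyclic_of_isolated_zero hr hd
  have hmem : ∀ z, ∃ k : ℤ, k * g = f z := by
    intro z
    have : f z ∈ AddSubgroup.closure {g} := hg ▸ ⟨z, rfl⟩
    obtain ⟨k, hk⟩ := AddSubgroup.mem_closure_singleton.1 this
    exact ⟨k, by simpa using hk⟩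
  obtain ⟨a, ha⟩ := hmem (1, 0)
  obtain ⟨b, hb⟩ := hmem (0, 1)
  obtain ⟨⟨i, j⟩, hij⟩ : g ∈ f.range := hg ▸ AddSubgroup.subset_closure rfl
  simp only [f, AddMonoidHom.coe_mk, ZeroHom.coe_mk] at ha hb hij
  norm_num at ha hb
  have hg0 : g ≠ 0 := by
    rintro rfl
    rw [← ha, ← hb] at hn
    norm_num at hn
  have key : a * i + b * j = 1 := by
    have : g * ((a * i + b * j : ℤ) : ℝ) = g * 1 := by
      push_cast
      rw [← ha, ← hb] at hij
      linarith
    exact_mod_cast mul_left_cancel₀ hg0 this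
  have hrg : r < |g| := by
    have := hsep i j (by rw [hij]; exact hg0)
    rwa [hij] at this
  rcases lt_or_gt_of_ne hg0 with h | h
  · rw [abs_of_neg h] at hrg
    refine ⟨-g, -a, -b, -i, -j, hrg, ?_, by linarith⟩
    ext <;> push_cast <;> linarith
  · rw [abs_of_pos h] at hrg
    refine ⟨g, a, b, i, j, hrg, ?_, key⟩
    ext <;> simp <;> linarith

lemma hasFDerivAt_separated (α β k : ℝ) {P Q : ℝ → ℝ} (hP : Differentiable ℝ P)
    (hQ : Differentiable ℝ Q) (x : V2) :
    HasFDerivAt (fun y : V2 => k * (P (α * y.1 + β * y.2) * Q (-β * y.1 + α * y.2)))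
      ((k * (deriv P (α * x.1 + β * x.2) * Q (-β * x.1 + α * x.2))) •
          (α • ContinuousLinearMap.fst ℝ ℝ ℝ + β • ContinuousLinearMap.snd ℝ ℝ ℝ) +
        (k * (P (α * x.1 + β * x.2) * deriv Q (-β * x.1 + α * x.2))) •
          (-β • ContinuousLinearMap.fst ℝ ℝ ℝ + α • ContinuousLinearMap.snd ℝ ℝ ℝ)) x := by
  have hlin : ∀ s t : ℝ, HasFDerivAt (fun y : V2 => s * y.1 + t * y.2)
      (s • ContinuousLinearMap.fst ℝ ℝ ℝ + t • ContinuousLinearMap.snd ℝ ℝ ℝ) x := fun s t =>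
    (hasFDerivAt_fst.const_mul s).add (hasFDerivAt_snd.const_mul t)
  have h1 := (hP (α * x.1 + β * x.2)).hasDerivAt.comp_hasFDerivAt x (hlin α β)
  have h2 := (hQ (-β * x.1 + α * x.2)).hasDerivAt.comp_hasFDerivAt x (hlin (-β) α)
  refine ((h1.mul h2).const_mul k).congr_fderiv ?_
  ext <;> simp <;> ring

lemma Zper.exists_norm_le {E : Type*} [NormedAddCommGroup E] {g : V2 → E} (hg : Zper g)
    (hc : Continuous g) : ∃ C : ℝ, 0 ≤ C ∧ ∀ x, ‖g x‖ ≤ C := by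
  obtain ⟨C, hC⟩ := (isCompact_Icc (a := ((0 : ℝ), (0 : ℝ))) (b := ((1 : ℝ), (1 : ℝ))))
    |>.exists_bound_of_continuousOn hc.continuousOn
  have hb : ∀ x, ‖g x‖ ≤ C := by
    intro x
    have h1 := hg (Int.fract x.1, Int.fract x.2) ⌊x.1⌋ ⌊x.2⌋
    simp only [Int.fract_add_floor] at h1
    rw [show x = (x.1, x.2) from rfl, h1]
    exact hC _ ⟨⟨Int.fract_nonneg _, Int.fract_nonneg _⟩,
      ⟨(Int.fract_lt_one _).le, (Int.fract_lt_one _).le⟩⟩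
  exact ⟨C, (norm_nonneg _).trans (hb 0), hb⟩

lemma Zper.exists_lipschitzWith {E : Type*} [NormedAddCommGroup E] [NormedSpace ℝ E] {g : V2 → E}
    (hg : Zper g) (hc : ContDiff ℝ 1 g) : ∃ L : NNReal, LipschitzWith L g := by
  have hper : Zper (fderiv ℝ g) := by
    intro x m n
    have : (fun y => g (y + ((m : ℝ), (n : ℝ)))) = g := funext fun y => hg y m n
    have h2 := fderiv_comp_add_right (𝕜 := ℝ) (f := g) (x := x) ((m : ℝ), (n : ℝ))
    rw [this] at h2
    exact h2.symm
  obtain ⟨C, hC0, hC⟩ := hper.exists_norm_le (hc.continuous_fderiv (by norm_num))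
  exact ⟨⟨C, hC0⟩, lipschitzWith_of_nnnorm_fderiv_le (hc.differentiable (by norm_num)) hC⟩

lemma exists_pulse (A t₀ ε : ℝ) (hA : 0 ≤ A) (hε : 0 < ε) :
    ∃ B a : ℝ → ℝ, ContDiff ℝ (⊤ : ℕ∞) a ∧ (∀ t, HasDerivAt B (a t) t) ∧ (∀ t, 0 ≤ a t) ∧
      (∀ t, 0 ≤ B t ∧ B t ≤ A) ∧ (∀ t, t ≤ t₀ → B t = 0) ∧ (∀ t, t₀ + ε ≤ t → B t = A) ∧
      (∀ t, t < t₀ → a t = 0) ∧ (∀ t, t₀ + ε < t → a t = 0) := by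
  set B : ℝ → ℝ := fun t => A * Real.smoothTransition ((t - t₀) / ε) with hBdef
  have hB : ContDiff ℝ (⊤ : ℕ∞) B :=
    contDiff_const.mul (Real.smoothTransition.contDiff.comp (by fun_prop))
  have hmono : Monotone B := fun s t hst =>
    mul_le_mul_of_nonneg_left (Real.smoothTransition.monotone (by gcongr)) hA
  have h0 : ∀ t, t ≤ t₀ → B t = 0 := fun t ht => by
    simp only [hBdef]
    rw [Real.smoothTransition.zero_of_nonpos
      (div_nonpos_of_nonpos_of_nonneg (by linarith) hε.le), mul_zero]
  have h1 : ∀ t, t₀ + ε ≤ t → B t = A := fun t ht => by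
    simp only [hBdef]
    rw [Real.smoothTransition.one_of_one_le ((one_le_div hε).2 (by linarith)), mul_one]
  refine ⟨B, deriv B, ?_, fun t => (hB.differentiable (by simp) t).hasDerivAt,
    fun t => hmono.deriv_nonneg, fun t => ⟨?_, ?_⟩, h0, h1, fun t ht => ?_, fun t ht => ?_⟩
  · exact (contDiff_infty_iff_deriv.1 hB).2
  · exact mul_nonneg hA (Real.smoothTransition.nonneg _)
  · exact mul_le_of_le_one_right hA (Real.smoothTransition.le_one _)
  · have : B =ᶠ[𝓝 t] fun _ => 0 := by
      filter_upwards [Iio_mem_nhds ht] with y hy using h0 y (le_of_lt hy)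
    rw [this.deriv_eq, deriv_const]
  · have : B =ᶠ[𝓝 t] fun _ => A := by
      filter_upwards [Ioi_mem_nhds ht] with y hy using h1 y (le_of_lt hy)
    rw [this.deriv_eq, deriv_const]

lemma en_nonneg (v : V2) : 0 ≤ en v := Real.sqrt_nonneg _

lemma en_sq (v : V2) : en v ^ 2 = v.1 ^ 2 + v.2 ^ 2 := Real.sq_sqrt (by positivity)

lemma abs_inner2_le (x y : V2) : |inner2 x y| ≤ en x * en y := by
  rw [en, en, ← Real.sqrt_mul (by positivity)]
  apply Real.abs_le_sqrt
  rw [inner2]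
  nlinarith [sq_nonneg (x.1 * y.2 - x.2 * y.1)]

lemma inner2_add_left (x y z : V2) : inner2 (x + y) z = inner2 x z + inner2 y z := by
  simp only [inner2, Prod.fst_add, Prod.snd_add]; ring

lemma inner2_smul_left (k : ℝ) (x y : V2) : inner2 (k • x) y = k * inner2 x y := by
  simp only [inner2, Prod.smul_fst, Prod.smul_snd, smul_eq_mul]; ring

lemma inner2_self (x : V2) : inner2 x x = en x ^ 2 := by
  rw [en_sq, inner2]; ring

lemma en_pperp (v : V2) : en (pperp v) = en v := by
  simp only [en, pperp, neg_sq, add_comm]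

lemma norm_le_en (v : V2) : ‖v‖ ≤ en v := by
  rw [Prod.norm_def, Real.norm_eq_abs, Real.norm_eq_abs]
  exact max_le (Real.abs_le_sqrt (by nlinarith)) (Real.abs_le_sqrt (by nlinarith))

lemma en_le_two_mul_norm (v : V2) : en v ≤ 2 * ‖v‖ := by
  have h1 : |v.1| ≤ ‖v‖ := norm_fst_le v
  have h2 : |v.2| ≤ ‖v‖ := norm_snd_le v
  have h0 := norm_nonneg v
  apply Real.sqrt_le_iff.2 ⟨by positivity, ?_⟩
  rw [← sq_abs v.1, ← sq_abs v.2]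
  nlinarith [abs_nonneg v.1, abs_nonneg v.2]

lemma en_vhat_le (c : ℝ) (v : V2) : en (vhat c v) ≤ en v := by
  have h1 : 1 ≤ Real.sqrt (1 + (v.1 ^ 2 + v.2 ^ 2) / c ^ 2) := by
    rw [Real.one_le_sqrt]
    have : 0 ≤ (v.1 ^ 2 + v.2 ^ 2) / c ^ 2 := by positivity
    linarith
  rw [vhat]
  set k := 1 / Real.sqrt (1 + (v.1 ^ 2 + v.2 ^ 2) / c ^ 2) with hk
  have hk0 : 0 ≤ k := by positivity
  have hk1 : k ≤ 1 := by rw [hk, div_le_one (by linarith)]; exact h1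
  apply Real.sqrt_le_sqrt
  simp only [Prod.smul_fst, Prod.smul_snd, smul_eq_mul]
  have : k ^ 2 ≤ 1 := by nlinarith
  nlinarith [sq_nonneg v.1, sq_nonneg v.2]

lemma inner2_pperp_vhat (c : ℝ) (v : V2) : inner2 (pperp (vhat c v)) v = 0 := by
  simp only [inner2, pperp, vhat, Prod.smul_fst, Prod.smul_snd, smul_eq_mul]; ring

/-- Smooth substitute for the Euclidean norm. -/
def regNorm (v : V2) : ℝ := Real.sqrt (1 + (v.1 ^ 2 + v.2 ^ 2))

lemma regNorm_pos (v : V2) : 0 < regNorm v := Real.sqrt_pos.2 (by positivity)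

lemma en_le_regNorm (v : V2) : en v ≤ regNorm v := Real.sqrt_le_sqrt (by linarith)

lemma regNorm_le (v : V2) : regNorm v ≤ 1 + en v := by
  have := en_nonneg v
  apply Real.sqrt_le_iff.2 ⟨by positivity, ?_⟩
  nlinarith [en_sq v]

lemma hasDerivAt_regNorm {V : ℝ → V2} {V' : V2} {t : ℝ} (hV : HasDerivAt V V' t) :
    HasDerivAt (fun s => regNorm (V s)) (inner2 V' (V t) / regNorm (V t)) t := by
  have h1 : HasDerivAt (fun s => (V s).1) V'.1 t :=
    (hasFDerivAt_fst (p := V t)).comp_hasDerivAt t hV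
  have h2 : HasDerivAt (fun s => (V s).2) V'.2 t :=
    (hasFDerivAt_snd (p := V t)).comp_hasDerivAt t hV
  have h : HasDerivAt (fun s => 1 + ((V s).1 ^ 2 + (V s).2 ^ 2)) (2 * inner2 V' (V t)) t := by
    refine (((h1.pow 2).add (h2.pow 2)).const_add 1).congr_deriv ?_
    simp only [inner2]
    push_cast
    ring
  exact (h.sqrt (by positivity)).congr_deriv (mul_div_mul_left _ _ two_ne_zero)

lemma hasDerivAt_inner2_const {V : ℝ → V2} {V' : V2} {t : ℝ} (hV : HasDerivAt V V' t) (w : V2) :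
    HasDerivAt (fun s => inner2 (V s) w) (inner2 V' w) t := by
  have h1 : HasDerivAt (fun s => (V s).1) V'.1 t :=
    (hasFDerivAt_fst (p := V t)).comp_hasDerivAt t hV
  have h2 : HasDerivAt (fun s => (V s).2) V'.2 t :=
    (hasFDerivAt_snd (p := V t)).comp_hasDerivAt t hV
  exact (h1.mul_const w.1).add (h2.mul_const w.2)

/-- If the power of the force is at most `(1 + K a) |V|`, the regularized speed varies by at most
`t + K B`, where `B' = a`. -/
lemma regNorm_variation {V V' : ℝ → V2} {B a : ℝ → ℝ} {K : ℝ} (hK : 0 ≤ K)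
    (hV : ∀ t, HasDerivAt V (V' t) t) (hB : ∀ t, HasDerivAt B (a t) t) (ha : ∀ t, 0 ≤ a t)
    (hpow : ∀ t, |inner2 (V' t) (V t)| ≤ (1 + K * a t) * en (V t)) :
    Antitone (fun t => regNorm (V t) - t - K * B t) ∧
      Monotone (fun t => regNorm (V t) + t + K * B t) := by
  have key : ∀ t, |inner2 (V' t) (V t) / regNorm (V t)| ≤ 1 + K * a t := by
    intro t
    rw [abs_div, abs_of_pos (regNorm_pos _), div_le_iff₀ (regNorm_pos _)]
    refine (hpow t).trans ?_
    have := mul_nonneg hK (ha t)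
    gcongr
    exact en_le_regNorm _
  constructor
  · refine antitone_of_hasDerivAt_nonpos
      (fun t => ((hasDerivAt_regNorm (hV t)).sub (hasDerivAt_id t)).sub ((hB t).const_mul K)) ?_
    intro t
    have := (abs_le.1 (key t)).2
    simp only [Pi.zero_apply]
    linarith
  · refine monotone_of_hasDerivAt_nonneg
      (fun t => ((hasDerivAt_regNorm (hV t)).add (hasDerivAt_id t)).add ((hB t).const_mul K)) ?_
    intro t
    have := (abs_le.1 (key t)).1
    simp only [Pi.zero_apply]
    linarith

set_option maxHeartbeats 400000 in
/-- A short strong pulse in the direction of a Lipschitz field bounded away from zero accelerates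
all slow particles. -/
lemma exists_accelerating_pulse (W : V2 → V2) (L : NNReal) (hL : LipschitzWith L W) (K : ℝ)
    (hK : ∀ x, en (W x) ≤ K) (hW : ∀ x, 1 ≤ en (W x)) (𝔟 τ : ℝ) (hτ : 0 < τ) (M : ℝ)
    (hM : 0 < M) :
    ∃ a : ℝ → ℝ, ContDiff ℝ (⊤ : ℕ∞) a ∧ (∃ δ > (0 : ℝ), ∀ t, t ≤ δ ∨ τ - δ ≤ t → a t = 0) ∧
      ∃ Mt > (0 : ℝ), ∀ (c : ℝ) (Force : ℝ → V2 → V2 → V2), (∀ t x v, en (Force t x v) ≤ 1) →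
        ∀ x v : V2, en v < M → ∀ X V : ℝ → V2,
          IsRelChar c
            (fun t y w => Force t y w + a t • W y + 𝔟 • pperp (vhat c w)) 0 x v X V →
          M + 1 ≤ en (V τ) ∧ en (V τ) < Mt := by
  have hK1 : 1 ≤ K := (hW 0).trans (hK 0)
  set A : ℝ := 4 * M + 4 * τ + 8 with hA
  have hA0 : 0 < A := by positivity
  set R : ℝ := 1 + M + τ + K * A with hR
  have hR0 : 0 < R := by positivity
  set C : ℝ := K * (1 + |𝔟| * R) with hC
  have hC0 : 0 ≤ C := by positivity
  set D : ℝ := C + 4 * L * R + 1 with hD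
  have hD0 : 0 < D := by positivity
  set ε : ℝ := min (τ / 8) (1 / D) with hε
  have hε0 : 0 < ε := by positivity
  have hετ : ε ≤ τ / 8 := min_le_left _ _
  have hεD : ε * D ≤ 1 := by
    have : ε ≤ 1 / D := min_le_right _ _
    rwa [le_div_iff₀ hD0] at this
  have hLR : 0 ≤ 4 * L * R := by positivity
  have hεC : ε * C ≤ 1 := by nlinarith
  have hεL : 4 * (L * (R * ε)) ≤ 1 := by nlinarith
  obtain ⟨B, a, has, hBa, ha0, hB, hBl, hBr, hal, har⟩ := exists_pulse A (τ / 2) ε hA0.le hε0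
  set t₁ : ℝ := τ / 2 + ε with ht₁
  refine ⟨a, has, ⟨τ / 4, by positivity, ?_⟩, R + 1, by positivity, ?_⟩
  · rintro t (ht | ht)
    · exact hal t (by linarith)
    · exact har t (by linarith)
  rintro c Force hF x v hv X V ⟨-, hV0, hder⟩
  have hX := fun t => (hder t).1
  have hV := fun t => (hder t).2
  simp only at hV
  obtain ⟨hanti, hmono⟩ := regNorm_variation (K := K) (by linarith) hV hBa ha0 (by
    intro t
    rw [inner2_add_left, inner2_add_left, inner2_smul_left, inner2_smul_left, inner2_pperp_vhat,
      mul_zero, add_zero]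
    have h1 := abs_inner2_le (Force t (X t) (V t)) (V t)
    have h2 := abs_inner2_le (W (X t)) (V t)
    have h3 := mul_le_mul_of_nonneg_right (hF t (X t) (V t)) (en_nonneg (V t))
    have h4 := mul_le_mul_of_nonneg_right (hK (X t)) (en_nonneg (V t))
    have h5 := mul_le_mul_of_nonneg_left (h2.trans h4) (ha0 t)
    refine (abs_add_le _ _).trans ?_
    rw [abs_mul, abs_of_nonneg (ha0 t)]
    nlinarith)
  have hV0' : regNorm (V 0) ≤ 1 + M := by rw [hV0]; linarith [regNorm_le v]
  have hpre : ∀ t, 0 ≤ t → regNorm (V t) ≤ 1 + M + t + K * B t := by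
    intro t ht
    have := hanti ht
    simp only [hBl 0 (by linarith)] at this
    linarith
  have hVR : ∀ t, 0 ≤ t → t ≤ τ → en (V t) ≤ R := by
    intro t h0 h1
    have h2 := mul_le_mul_of_nonneg_left (hB t).2 (by linarith : 0 ≤ K)
    linarith [hpre t h0, en_le_regNorm (V t)]
  set x₀ := X (τ / 2) with hx₀
  have hdisp : ∀ t ∈ Set.Icc (τ / 2) t₁, ‖X t - x₀‖ ≤ R * ε := by
    intro t ht
    have := Convex.norm_image_sub_le_of_norm_hasDerivWithin_le (C := R) (s := Set.Icc (τ / 2) t₁)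
      (fun s _ => (hX s).hasDerivWithinAt)
      (fun s hs => ((norm_le_en _).trans (en_vhat_le _ _)).trans
        (hVR s (by linarith [hs.1]) (by linarith [hs.2]))) (convex_Icc _ _)
      (Set.left_mem_Icc.2 (by linarith)) ht
    refine this.trans (mul_le_mul_of_nonneg_left ?_ hR0.le)
    rw [Real.norm_eq_abs, abs_of_nonneg (by linarith [ht.1])]
    linarith [ht.2]
  set w : V2 := W x₀ with hw
  have hw1 : 1 ≤ en w := hW x₀
  have halign : ∀ t ∈ Set.Icc (τ / 2) t₁, en w ^ 2 / 2 ≤ inner2 (W (X t)) w := by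
    intro t ht
    have h1 : en (W (X t) - w) ≤ 1 / 2 := by
      have h2 := hL.norm_sub_le (X t) x₀
      have h3 := mul_le_mul_of_nonneg_left (hdisp t ht) L.coe_nonneg
      linarith [en_le_two_mul_norm (W (X t) - w)]
    have h2 : inner2 (W (X t)) w = inner2 (W (X t) - w) w + en w ^ 2 := by
      rw [← inner2_self, ← inner2_add_left, sub_add_cancel]
    have h3 := (abs_le.1 (abs_inner2_le (W (X t) - w) w)).1
    have h4 := mul_le_mul_of_nonneg_right h1 (en_nonneg w)
    nlinarith
  have hkick : MonotoneOn (fun t => inner2 (V t) w + C * t - en w ^ 2 / 2 * B t)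
      (Set.Icc (τ / 2) t₁) := by
    have hd : ∀ t, HasDerivAt (fun t => inner2 (V t) w + C * t - en w ^ 2 / 2 * B t) _ t :=
      fun t => ((hasDerivAt_inner2_const (hV t) w).add
        ((hasDerivAt_id t).const_mul C)).sub ((hBa t).const_mul (en w ^ 2 / 2))
    refine monotoneOn_of_hasDerivWithinAt_nonneg (convex_Icc _ _)
      (fun t _ => (hd t).continuousAt.continuousWithinAt)
      (fun t _ => (hd t).hasDerivWithinAt) fun t ht => ?_
    have ht' := interior_subset ht
    rw [inner2_add_left, inner2_add_left, inner2_smul_left, inner2_smul_left]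
    have h1 := mul_le_mul_of_nonneg_left (halign t ht') (ha0 t)
    have h2 := (abs_le.1 (abs_inner2_le (Force t (X t) (V t)) w)).1
    have h3 : en (Force t (X t) (V t)) * en w ≤ 1 * K :=
      mul_le_mul (hF _ _ _) (hK _) (en_nonneg _) zero_le_one
    have h4 : |𝔟 * inner2 (pperp (vhat c (V t))) w| ≤ |𝔟| * (R * K) := by
      rw [abs_mul]
      refine mul_le_mul_of_nonneg_left ((abs_inner2_le _ _).trans ?_) (abs_nonneg _)
      refine mul_le_mul ?_ (hK _) (en_nonneg _) hR0.le
      rw [en_pperp]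
      exact (en_vhat_le _ _).trans (hVR t (by linarith [ht'.1]) (by linarith [ht'.2]))
    have h5 := (abs_le.1 h4).1
    have h6 : C = K + |𝔟| * (R * K) := by rw [hC]; ring
    linarith
  have hk := hkick (Set.left_mem_Icc.2 (by linarith)) (Set.right_mem_Icc.2 (by linarith))
    (by linarith : τ / 2 ≤ t₁)
  simp only [hBl (τ / 2) le_rfl, hBr t₁ le_rfl] at hk
  have hstart : en (V (τ / 2)) ≤ 1 + M + τ / 2 := by
    have := hpre (τ / 2) (by linarith)
    rw [hBl (τ / 2) le_rfl] at this
    linarith [en_le_regNorm (V (τ / 2))]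
  have hend : A / 2 - (1 + M + τ / 2) - 1 ≤ en (V t₁) := by
    have h1 := (abs_le.1 (abs_inner2_le (V (τ / 2)) w)).1
    have h2 := (abs_le.1 (abs_inner2_le (V t₁) w)).2
    have h3 := mul_le_mul_of_nonneg_right hstart (en_nonneg w)
    have h4 : C * t₁ = C * (τ / 2) + ε * C := by rw [ht₁]; ring
    have h5 : (A / 2 - (1 + M + τ / 2) - 1) * en w ≤ en (V t₁) * en w := by
      have : en w ^ 2 / 2 * A - en w * (1 + M + τ / 2) - 1 ≤ en (V t₁) * en w := by linarith
      have h6 : 0 ≤ A * (en w * (en w - 1)) :=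
        mul_nonneg hA0.le (mul_nonneg (by linarith) (by linarith))
      linarith
    exact le_of_mul_le_mul_right h5 (by linarith)
  have hpost := hmono (by linarith : t₁ ≤ τ)
  simp only [hBr t₁ le_rfl, hBr τ (by linarith)] at hpost
  constructor
  · linarith [regNorm_le (V τ), en_le_regNorm (V t₁)]
  · linarith [hVR τ hτ.le le_rfl]

lemma gradx_separated (α β : ℝ) (a : ℝ → ℝ) {P Q : ℝ → ℝ} (hP : Differentiable ℝ P)
    (hQ : Differentiable ℝ Q) (t : ℝ) (x : V2) :
    gradx (fun z => a z.1 * (P (α * z.2.1 + β * z.2.2) * Q (-β * z.2.1 + α * z.2.2))) t x =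
      (a t * (deriv P (α * x.1 + β * x.2) * Q (-β * x.1 + α * x.2)) * α +
          a t * (P (α * x.1 + β * x.2) * deriv Q (-β * x.1 + α * x.2)) * -β,
        a t * (deriv P (α * x.1 + β * x.2) * Q (-β * x.1 + α * x.2)) * β +
          a t * (P (α * x.1 + β * x.2) * deriv Q (-β * x.1 + α * x.2)) * α) := by
  simp only [gradx]
  rw [(hasFDerivAt_separated α β (a t) hP hQ x).fderiv]
  ext <;> simp

lemma lapx_separated (α β : ℝ) (a : ℝ → ℝ) {P Q : ℝ → ℝ} (hP : Differentiable ℝ P)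
    (hP' : Differentiable ℝ (deriv P)) (hQ : Differentiable ℝ Q)
    (hQ' : Differentiable ℝ (deriv Q)) (t : ℝ) (x : V2) :
    lapx (fun z => a z.1 * (P (α * z.2.1 + β * z.2.2) * Q (-β * z.2.1 + α * z.2.2))) t x =
      a t * (α ^ 2 + β ^ 2) *
        (deriv (deriv P) (α * x.1 + β * x.2) * Q (-β * x.1 + α * x.2) +
          P (α * x.1 + β * x.2) * deriv (deriv Q) (-β * x.1 + α * x.2)) := by
  have h1 := fun y => Prod.ext_iff.1 (gradx_separated α β a hP hQ t y)
  simp only [gradx] at h1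
  have h2 := fun k : ℝ => (hasFDerivAt_separated α β (a t) hP' hQ x).mul_const k
  have h3 := fun k : ℝ => (hasFDerivAt_separated α β (a t) hP hQ' x).mul_const k
  simp only [lapx, (h1 _).1, (h1 _).2]
  rw [((h2 α).fun_add (h3 (-β))).fderiv, ((h2 β).fun_add (h3 α)).fderiv]
  simp only [add_apply, smul_apply, ContinuousLinearMap.coe_fst', ContinuousLinearMap.coe_snd',
    smul_eq_mul, mul_one, mul_zero, add_zero, zero_add]
  ring

lemma mem_stripAround_of_abs_le {p eH : V2} {h : ℝ} (hh : 0 < h) {a b i j : ℤ}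
    (hn : pperp eH = (h * a, h * b)) (hunit : h ^ 2 * ((a : ℝ) ^ 2 + (b : ℝ) ^ 2) = 1)
    (hij : a * i + b * j = 1) {l : ℝ} {x : V2} {k : ℤ}
    (hx : |a * x.1 + b * x.2 - (a * p.1 + b * p.2) - k| ≤ l / h) :
    x ∈ stripAround (periodizedLine p eH) (pperp eH) l := by
  have e1 : eH.2 = h * a := congrArg Prod.fst hn
  have e2 : -eH.1 = h * b := congrArg Prod.snd hn
  have e3 : eH.1 = -(h * b) := by linarith
  have hijR : (a : ℝ) * i + b * j = 1 := by exact_mod_cast hij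
  set s : ℝ := a * x.1 + b * x.2 - (a * p.1 + b * p.2) - k with hs
  refine ⟨x - (h * s) • pperp eH,
    ⟨inner2 (x - p - (((k * i : ℤ) : ℝ), ((k * j : ℤ) : ℝ))) eH, k * i, k * j, ?_⟩, h * s, ?_, by simp⟩
  · ext
    · simp only [hn, inner2, e1, e3, Prod.fst_sub, Prod.snd_sub, Prod.fst_add, Prod.smul_fst,
        smul_eq_mul, hs]
      push_cast
      linear_combination (-(x.1 - p.1 - k * i)) * hunit - h ^ 2 * a * k * hijR
    · simp only [hn, inner2, e1, e3, Prod.fst_sub, Prod.snd_sub, Prod.snd_add, Prod.smul_snd,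
        smul_eq_mul, hs]
      push_cast
      linear_combination (-(x.2 - p.2 - k * j)) * hunit - h ^ 2 * b * k * hijR
  · rw [abs_mul, abs_of_pos hh]
    rwa [le_div_iff₀ hh, mul_comm] at hx

end

/-- **Accelerating electric field (Lemma 4.1): a smooth field, gradient and harmonic
outside the strip `ℋ_d`, with zero flux through the line `𝒟`, which pushes every
particle of initial speed `< M` above speed `M + 1` at time `τ`, robustly under any
perturbing force of sup norm at most 1.** -/
theorem accelerating_field_strip
    (ω : Set V2) (hωopen : IsOpen ω) (hωper : Zper fun x => x ∈ ω)
    -- the line ℋ: periodized line through p with unit direction eH, unit normal pperp eH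
    (p eH : V2) (heH : en eH = 1)
    (d : ℝ) (hd : 0 < d)
    (hHclosed : IsClosed (periodizedLine p eH))
    (hH2d : stripAround (periodizedLine p eH) (pperp eH) (2 * d) ⊆ ω)
    -- 4d is less than the distance between two successive lines of the preimage of ℋ
    (hspacing : ∀ y ∈ periodizedLine p eH, ∀ z ∈ periodizedLine p eH,
      inner2 (z - y) (pperp eH) ≠ 0 → 4 * d < |inner2 (z - y) (pperp eH)|)
    -- the closed line 𝒟 = {q + s·eD}, of length ℓ, not meeting ω, with unit normal pperp eD
    (q eD : V2) (heD : en eD = 1) (ℓ : ℝ) (hℓ : 0 < ℓ)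
    (hDper : ∃ m n : ℤ, ℓ • eD = ((m : ℝ), (n : ℝ)))
    (hDω : ∀ x ∈ periodizedLine q eD, x ∉ ω)
    (𝔟 : ℝ) (τ : ℝ) (hτ : 0 < τ) (M : ℝ) (hM : 0 < M) :
    ∃ Mt > (0 : ℝ), ∃ (ℰ : ℝ × V2 → V2) (φ : ℝ × V2 → ℝ), ∃ c₀ > (0 : ℝ),
      ContDiff ℝ (⊤ : ℕ∞) ℰ ∧ ContDiff ℝ (⊤ : ℕ∞) φ ∧
      (∀ t, Zper fun x => ℰ (t, x)) ∧ (∀ t, Zper fun x => φ (t, x)) ∧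
      -- ℰ = −∇φ outside the strip ℋ_d
      (∀ t ∈ Set.Icc (0 : ℝ) τ, ∀ x,
        x ∉ stripAround (periodizedLine p eH) (pperp eH) d → ℰ (t, x) = -gradx φ t x) ∧
      -- supp ℰ ⊂ (0,τ) × 𝕋²
      (∃ δ > (0 : ℝ), ∀ t x, t ≤ δ ∨ τ - δ ≤ t → ℰ (t, x) = 0) ∧
      -- φ is harmonic outside the strip ℋ_d
      (∀ t ∈ Set.Icc (0 : ℝ) τ, ∀ x,
        x ∉ stripAround (periodizedLine p eH) (pperp eH) d → lapx φ t x = 0) ∧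
      -- zero flux of ∇φ through 𝒟
      (∀ t ∈ Set.Icc (0 : ℝ) τ,
        (∫ s in (0 : ℝ)..ℓ, inner2 (gradx φ t (q + s • eD)) (pperp eD)) = 0) ∧
      -- the acceleration property, robust under any perturbing force of norm ≤ 1
      (∀ c ≥ c₀, ∀ Force : ℝ → V2 → V2 → V2,
        (∀ t, ∃ Lip : NNReal, LipschitzWith Lip fun z : V2 × V2 => Force t z.1 z.2) →
        (∀ t x v, en (Force t x v) ≤ 1) →
        ∀ x v : V2, en v < M →
        ∀ X V : ℝ → V2,
          IsRelChar c
            (fun t y w => Force t y w + ℰ (t, y) + 𝔟 • pperp (vhat c w)) 0 x v X V →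
          M + 1 ≤ en (V τ) ∧ en (V τ) < Mt) := by
  have hn1 : (pperp eH).1 ^ 2 + (pperp eH).2 ^ 2 = 1 := by
    rw [← en_sq, en_pperp, heH, one_pow]
  have hpmem : p ∈ periodizedLine p eH := ⟨0, 0, 0, by simp⟩
  obtain ⟨h, a, b, i, j, hdh, hn, hij⟩ := exists_primitive_normal (pperp eH) hn1 (4 * d)
    (by positivity) (by
      intro i j hne
      have e : inner2 (p + ((i : ℝ), (j : ℝ)) - p) (pperp eH)
          = i * (pperp eH).1 + j * (pperp eH).2 := by simp [inner2]
      have := hspacing p hpmem (p + ((i : ℝ), (j : ℝ))) ⟨0, i, j, by simp⟩ (by rwa [e])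
      rwa [e] at this)
  have hh : 0 < h := by linarith
  have hunit : h ^ 2 * ((a : ℝ) ^ 2 + (b : ℝ) ^ 2) = 1 := by
    rw [hn] at hn1
    linarith
  have hN : (1 : ℝ) ≤ (a : ℝ) ^ 2 + (b : ℝ) ^ 2 := by
    have h1 : 0 < a ^ 2 + b ^ 2 := by
      have : 0 < (a : ℝ) ^ 2 + (b : ℝ) ^ 2 := by
        by_contra hle
        nlinarith [sq_nonneg h]
      exact_mod_cast this
    exact_mod_cast h1
  have hparallel : a * eD.1 + b * eD.2 = 0 := by
    by_contra hne
    set s : ℝ := (a * p.1 + b * p.2 - (a * q.1 + b * q.2)) / (a * eD.1 + b * eD.2) with hs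
    have hs' : s * (a * eD.1 + b * eD.2) = a * p.1 + b * p.2 - (a * q.1 + b * q.2) :=
      div_mul_cancel₀ _ hne
    refine hDω (q + s • eD) ⟨s, 0, 0, by simp⟩
      (hH2d (mem_stripAround_of_abs_le hh hn hunit hij (k := 0) ?_))
    have : a * (q + s • eD).1 + b * (q + s • eD).2 - (a * p.1 + b * p.2) - ((0 : ℤ) : ℝ) = 0 := by
      simp only [Prod.fst_add, Prod.snd_add, Prod.smul_fst, Prod.smul_snd, smul_eq_mul]
      push_cast
      linarith
    rw [this, abs_zero]
    positivity
  obtain ⟨ρ, hρs, hρper, hρ1, hρexp⟩ := exists_periodic_exp (d / h) (by positivity)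
    (by rw [div_lt_iff₀ hh]; linarith)
  set P : ℝ → ℝ := fun s => ρ (s - (a * p.1 + b * p.2)) with hPdef
  set Q : ℝ → ℝ := fun s => Real.cos (2 * π * s) with hQdef
  have hPs : ContDiff ℝ (⊤ : ℕ∞) P := hρs.comp (contDiff_id.sub contDiff_const)
  have hQs : ContDiff ℝ (⊤ : ℕ∞) Q := Real.contDiff_cos.comp (contDiff_const.mul contDiff_id)
  have hQd : ∀ s, deriv Q s = -(2 * π * Real.sin (2 * π * s)) := fun s => by
    have := ((hasDerivAt_id s).const_mul (2 * π)).cos.deriv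
    simp only [id, mul_one] at this
    rw [hQdef, this]
    ring
  have hQdd : ∀ s, deriv (deriv Q) s = -((2 * π) ^ 2 * Q s) := fun s => by
    have := ((((hasDerivAt_id s).const_mul (2 * π)).sin.const_mul (2 * π)).fun_neg).deriv
    simp only [id, mul_one] at this
    rw [funext hQd, this]
    ring
  have hPdiff := hPs.differentiable (by simp)
  have hQdiff := hQs.differentiable (by simp)
  have hPd := (contDiff_infty_iff_deriv.1 hPs).2.differentiable (by simp)
  have hQd' := (contDiff_infty_iff_deriv.1 hQs).2.differentiable (by simp)
  have hPexp : ∀ x, x ∉ stripAround (periodizedLine p eH) (pperp eH) d →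
      deriv P (a * x.1 + b * x.2) = 2 * π * P (a * x.1 + b * x.2) ∧
        deriv (deriv P) (a * x.1 + b * x.2) = (2 * π) ^ 2 * P (a * x.1 + b * x.2) := by
    intro x hx
    obtain ⟨k, hk⟩ := hρexp (a * x.1 + b * x.2 - (a * p.1 + b * p.2)) fun k => by
      by_contra hle
      exact hx (mem_stripAround_of_abs_le hh hn hunit hij (not_lt.1 hle))
    have hPe : P =ᶠ[nhds (a * x.1 + b * x.2)]
        fun y => Real.exp (2 * π * (y - (a * p.1 + b * p.2) - k)) :=
      hk.comp_tendsto ((continuous_id.sub continuous_const).tendsto _)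
    have hexp : ∀ y : ℝ, HasDerivAt
        (fun y : ℝ => Real.exp (2 * π * (y - (a * p.1 + b * p.2) - k)))
        (2 * π * Real.exp (2 * π * (y - (a * p.1 + b * p.2) - k))) y := fun y =>
      (((((hasDerivAt_id y).sub_const _).sub_const _).const_mul (2 * π)).exp).congr_deriv
        (by simp only [id]; ring)
    rw [hPe.deriv_eq, hPe.deriv.deriv_eq, hPe.eq_of_nhds, (hexp _).deriv,
      funext fun y => (hexp y).deriv, ((hexp _).const_mul (2 * π)).deriv]
    exact ⟨rfl, by ring⟩
  have hPper : ∀ (x : V2) (m n : ℤ),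
      P (a * (x.1 + m) + b * (x.2 + n)) = P (a * x.1 + b * x.2) := by
    intro x m n
    simp only [hPdef]
    rw [← hρper (a * x.1 + b * x.2 - (a * p.1 + b * p.2)) (a * m + b * n)]
    congr 1
    push_cast
    ring
  have hphase : ∀ (x : V2) (m n : ℤ), 2 * π * (-b * (x.1 + m) + a * (x.2 + n)) =
      2 * π * (-b * x.1 + a * x.2) + ((-b * m + a * n : ℤ) : ℝ) * (2 * π) := by
    intro x m n
    push_cast
    ring
  set W : V2 → V2 := fun x => (-(2 * π * P (a * x.1 + b * x.2))) •
    ((a * Real.cos (2 * π * (-b * x.1 + a * x.2)) + b * Real.sin (2 * π * (-b * x.1 + a * x.2)),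
      b * Real.cos (2 * π * (-b * x.1 + a * x.2)) - a * Real.sin (2 * π * (-b * x.1 + a * x.2))) :
      V2) with hWdef
  have hWs : ContDiff ℝ (⊤ : ℕ∞) W := by
    have := hPs.comp (show ContDiff ℝ (⊤ : ℕ∞) fun x : V2 => a * x.1 + b * x.2 by fun_prop)
    simp only [Function.comp_def] at this
    simp only [hWdef]
    fun_prop
  have hWper : Zper W := by
    intro x m n
    simp only [hWdef, hPper, hphase, Real.cos_add_int_mul_two_pi, Real.sin_add_int_mul_two_pi]
  have hWen : ∀ x, 1 ≤ en (W x) := by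
    intro x
    rw [en, Real.one_le_sqrt]
    have e : (W x).1 ^ 2 + (W x).2 ^ 2 =
        (2 * π * P (a * x.1 + b * x.2)) ^ 2 * ((a : ℝ) ^ 2 + (b : ℝ) ^ 2) := by
      simp only [hWdef, Prod.smul_mk, smul_eq_mul]
      linear_combination (2 * π * P (a * x.1 + b * x.2)) ^ 2 * ((a : ℝ) ^ 2 + (b : ℝ) ^ 2) *
        Real.sin_sq_add_cos_sq (2 * π * (-b * x.1 + a * x.2))
    have h1 : 1 ≤ 2 * π * P (a * x.1 + b * x.2) :=
      one_le_mul_of_one_le_of_one_le (by linarith [Real.two_le_pi]) (hρ1 _)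
    rw [e]
    exact one_le_mul_of_one_le_of_one_le (one_le_pow₀ h1) hN
  obtain ⟨K, -, hK⟩ := hWper.exists_norm_le hWs.continuous
  obtain ⟨L, hL⟩ := hWper.exists_lipschitzWith (hWs.of_le (by exact_mod_cast le_top))
  obtain ⟨amp, hamp, ⟨δ, hδ, hampδ⟩, Mt, hMt, hacc⟩ := exists_accelerating_pulse W L hL (2 * K)
    (fun x => (en_le_two_mul_norm _).trans (by linarith [hK x])) hWen 𝔟 τ hτ M hM
  refine ⟨Mt, hMt, fun z => amp z.1 • W z.2,
    fun z => amp z.1 * (P (a * z.2.1 + b * z.2.2) * Q (-b * z.2.1 + a * z.2.2)), 1, one_pos,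
    ?_, ?_, ?_, ?_, ?_, ⟨δ, hδ, ?_⟩, ?_, ?_, ?_⟩
  · exact (hamp.comp contDiff_fst).smul (hWs.comp contDiff_snd)
  · exact (hamp.comp contDiff_fst).mul
      ((hPs.comp (by fun_prop)).mul (hQs.comp (by fun_prop)))
  · intro t x m n
    exact congrArg (amp t • ·) (hWper x m n)
  · intro t x m n
    simp only [hPper, hQdef, hphase, Real.cos_add_int_mul_two_pi]
  · intro t _ x hx
    rw [gradx_separated a b amp hPdiff hQdiff, (hPexp x hx).1, hQd]
    ext <;> simp only [hWdef, hQdef, Prod.smul_mk, smul_eq_mul, Prod.fst_neg, Prod.snd_neg] <;> ring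
  · intro t x ht
    simp only [hampδ t ht, zero_smul]
  · intro t _ x hx
    rw [lapx_separated a b amp hPdiff hPd hQdiff hQd', (hPexp x hx).2, hQdd]
    ring
  · intro t _
    obtain ⟨m, n, hmn⟩ := hDper
    have hm : ℓ * eD.1 = m := congrArg Prod.fst hmn
    have hn' : ℓ * eD.2 = n := congrArg Prod.snd hmn
    set κ : ℝ := -b * eD.1 + a * eD.2 with hκ
    set C : ℝ := amp t * deriv P (a * q.1 + b * q.2) with hC
    have hint : ∀ s : ℝ, inner2 (gradx (fun z => amp z.1 *
        (P (a * z.2.1 + b * z.2.2) * Q (-b * z.2.1 + a * z.2.2))) t (q + s • eD)) (pperp eD) =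
        C * (κ * Real.cos (2 * π * (-b * q.1 + a * q.2 + s * κ))) := by
      intro s
      have e1 : a * (q + s • eD).1 + b * (q + s • eD).2 = a * q.1 + b * q.2 := by
        simp only [Prod.fst_add, Prod.snd_add, Prod.smul_fst, Prod.smul_snd, smul_eq_mul]
        linear_combination s * hparallel
      have e2 : -b * (q + s • eD).1 + a * (q + s • eD).2 = -b * q.1 + a * q.2 + s * κ := by
        simp only [Prod.fst_add, Prod.snd_add, Prod.smul_fst, Prod.smul_snd, smul_eq_mul, hκ]
        ring
      rw [gradx_separated a b amp hPdiff hQdiff, e1, e2]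
      simp only [inner2, pperp, hC, hQdef]
      linear_combination (-(amp t * (P (a * q.1 + b * q.2) *
        deriv Q (-b * q.1 + a * q.2 + s * κ)))) * hparallel
    have hderiv : ∀ s : ℝ, HasDerivAt
        (fun s => C / (2 * π) * Real.sin (2 * π * (-b * q.1 + a * q.2 + s * κ)))
        (C * (κ * Real.cos (2 * π * (-b * q.1 + a * q.2 + s * κ)))) s := by
      intro s
      refine (((((hasDerivAt_id s).mul_const κ).const_add (-b * q.1 + a * q.2)).const_mul
        (2 * π)).sin.const_mul (C / (2 * π))).congr_deriv ?_
      have := Real.pi_ne_zero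
      simp only [id]
      field_simp
    simp only [hint]
    rw [intervalIntegral.integral_eq_sub_of_hasDerivAt (fun s _ => hderiv s)
      (Continuous.intervalIntegrable (by fun_prop) _ _)]
    have e : 2 * π * (-b * q.1 + a * q.2 + ℓ * κ) =
        2 * π * (-b * q.1 + a * q.2 + 0 * κ) + ((-b * m + a * n : ℤ) : ℝ) * (2 * π) := by
      push_cast
      rw [← hm, ← hn', hκ]
      ring
    rw [e, Real.sin_add_int_mul_two_pi, sub_self]
  · intro c _ Force _ hF x v hv X V hXV
    exact hacc c Force hF x v hv X V hXV

end
end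

section
/- Let x₀ ∈ 𝕋², r₀ > 0, M̄ > 1, and let 𝔟 ∈ ℝ∖{0} be a constant magnetic field. There exist c₀ > 0 (depending on 𝔟, x₀, r₀), m̲ > 0 (depending only on 𝔟, x₀, r₀), T₀ > 0 and κ > 0 (depending on 𝔟, x₀, r₀, M̄) such that for every speed of light c ≥ c₀ and every force F ∈ L^∞(0,T₀; W^{1,∞}(𝕋²×ℝ²; ℝ²)) with ‖F‖_{L^∞} ≤ κ, the relativistic characteristics (X̄, V̄) associated with the force v̂⊥𝔟 + F satisfy: for every x ∈ 𝕋² and every v ∈ ℝ² with m̲ ≤ |v| ≤ M̄, there exists t ∈ (T₀/4, 3T₀/4) with X̄(t,0,x,v) ∈ B(x₀, r₀/2), and moreover |v|/2 ≤ |V̄(s,0,x,v)| ≤ 2|v| for all s ∈ [0,T₀]. -/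
noncomputable section

open MeasureTheory Real

/-- Every circle of large radius passes close to each translate of the lattice `ℤ[i]`. -/
theorem exists_radius_circle_meets_lattice_nhds (r : ℝ) (hr : 0 < r) :
    ∃ R₀ > (0 : ℝ), ∀ R ≥ R₀, ∀ p x : ℂ, ∃ q : ℂ, ‖q - p‖ = R ∧
      ∃ m n : ℤ, ‖q - (x + m + n * Complex.I)‖ < r := by
  refine ⟨(8 / r + 10) ^ 2 / 2, by positivity, fun R hR p x => ?_⟩
  have hs₀ : 0 < 8 / r := by positivity
  obtain ⟨s, hs, hsR⟩ : ∃ s : ℝ, 8 / r + 10 ≤ s ∧ s ^ 2 = 2 * R := by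
    refine ⟨√(2 * R), Real.le_sqrt_of_sq_le (by linarith), Real.sq_sqrt ?_⟩
    nlinarith [sq_nonneg (8 / r + 10)]
  have hsr : 8 < s * r := by
    have h : 8 / r < s := by linarith
    rwa [div_lt_iff₀ hr] at h
  have hs10 : 10 ≤ s := by linarith
  have hR0 : 0 < R := by nlinarith
  obtain ⟨N, hN, hN'⟩ : ∃ N : ℕ, s ≤ N ∧ (N : ℝ) < s + 1 :=
    ⟨⌈s⌉₊, Nat.le_ceil s, Nat.ceil_lt_add_one (by linarith)⟩
  set a : ℝ := x.re - p.re
  set u : ℕ → ℝ := fun k => Int.fract a + k with hu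
  set h : ℕ → ℝ := fun k => √(R ^ 2 - u k ^ 2)
  have hfr0 := Int.fract_nonneg a
  have hfr1 := Int.fract_lt_one a
  have hu0 : ∀ k, 0 ≤ u k := fun k => by simp only [hu]; positivity
  have huN : ∀ k ≤ N, u k ≤ 2 * s := fun k hk => by
    have : (k : ℝ) ≤ N := by exact_mod_cast hk
    simp only [hu]; linarith
  have hpos : ∀ k ≤ N, R ^ 2 / 4 ≤ R ^ 2 - u k ^ 2 := fun k hk => by
    have hsq : u k ^ 2 ≤ 8 * R := by nlinarith [huN k hk, hu0 k]
    have hR50 : 50 ≤ R := by nlinarith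
    nlinarith
  have hsq : ∀ k ≤ N, h k ^ 2 = R ^ 2 - u k ^ 2 := fun k hk =>
    Real.sq_sqrt (by nlinarith [hpos k hk])
  have hlow : ∀ k ≤ N, R / 2 ≤ h k := fun k hk =>
    Real.le_sqrt_of_sq_le (by nlinarith [hpos k hk])
  have hup : ∀ k ≤ N, h k ≤ R := fun k hk => by
    nlinarith [hsq k hk, hlow k hk, sq_nonneg (u k)]
  have hstep : ∀ k, k + 1 ≤ N → h k - h (k + 1) < r := fun k hk => by
    have hk' : k ≤ N := by omega
    have e1 := hsq k hk'
    have e2 := hsq (k + 1) hk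
    have l1 := hlow k hk'
    have l2 := hlow (k + 1) hk
    have hu1 : u (k + 1) = u k + 1 := by simp only [hu]; push_cast; ring
    have hu2 : u k < s + 1 := by
      have : (k : ℝ) + 1 ≤ N := by exact_mod_cast hk
      simp only [hu]; linarith
    have key : (h k - h (k + 1)) * (h k + h (k + 1)) = 2 * u k + 1 := by
      rw [hu1] at e2; nlinarith
    by_contra! hcon
    have : r * R ≤ (h k - h (k + 1)) * (h k + h (k + 1)) :=
      mul_le_mul hcon (by linarith) hR0.le (by linarith)
    have hRr : 4 * s < r * R := by nlinarith
    linarith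
  have hdrop : 1 ≤ h 0 - h N := by
    have e1 := hsq 0 (by omega)
    have e2 := hsq N le_rfl
    have l1 := hlow 0 (by omega)
    have l2 := hlow N le_rfl
    have b1 := hup 0 (by omega)
    have b2 := hup N le_rfl
    have key : 2 * R ≤ (h 0 - h N) * (h 0 + h N) := by
      have : (h 0 - h N) * (h 0 + h N) = u N ^ 2 - u 0 ^ 2 := by nlinarith
      rw [this]
      simp only [hu]
      push_cast
      nlinarith
    nlinarith
  set d : ℝ := x.im - p.im with hd
  set n : ℤ := ⌊h 0 - d⌋
  have hn1 : d + n ≤ h 0 := by linarith [Int.floor_le (h 0 - d)]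
  have hn2 : h 0 - 1 < d + n := by linarith [Int.lt_floor_add_one (h 0 - d)]
  obtain ⟨k, hkN, hk⟩ : ∃ k ≤ N, |h k - (d + n)| < r := by
    classical
    have hex : ∃ k, h k ≤ d + n := ⟨N, by linarith⟩
    have hle : Nat.find hex ≤ N := Nat.find_min' hex (by linarith)
    refine ⟨Nat.find hex, hle, ?_⟩
    have hspec := Nat.find_spec hex
    rcases hf : Nat.find hex with _ | j
    · rw [hf] at hspec
      rw [abs_lt]
      constructor <;> linarith
    · rw [hf] at hspec hle
      have hj : d + n < h j := not_le.mp (Nat.find_min hex (by omega))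
      have := hstep j hle
      rw [abs_lt]
      constructor <;> linarith
  refine ⟨p + ⟨u k, h k⟩, ?_, k - ⌊a⌋, n, ?_⟩
  · rw [add_sub_cancel_left, ← sq_eq_sq₀ (norm_nonneg _) hR0.le, Complex.sq_norm,
      Complex.normSq_mk]
    linarith [hsq k hkN]
  · have hq : p + ⟨u k, h k⟩ - (x + ((k - ⌊a⌋ : ℤ) : ℂ) + n * Complex.I)
        = ((h k - (d + n) : ℝ) : ℂ) * Complex.I := by
      have := Int.fract_add_floor a
      apply Complex.ext
      · simp [hu]; linarith
      · simp [hd]; ring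
    rw [hq, norm_mul, Complex.norm_I, mul_one, Complex.norm_real, Real.norm_eq_abs]
    exact hk

/-- For `z' = -i b g z + f` and `w' = g z` with `‖f‖ ≤ κ`, the pair `(w, z)` follows a uniform
circular motion of phase `b ∫ g`, up to an error linear in `κ`. -/
theorem exists_phase_norm_sub_rotation_le (b κ : ℝ) (g : ℝ → ℝ) (hg : Continuous g)
    (w z f : ℝ → ℂ) (hw : ∀ t, HasDerivAt w (g t * z t) t)
    (hz : ∀ t, HasDerivAt z (-Complex.I * b * (g t * z t) + f t) t) (hf : ∀ t, ‖f t‖ ≤ κ) :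
    ∃ φ : ℝ → ℝ, (∀ t, HasDerivAt φ (g t) t) ∧ ∀ t, 0 ≤ t →
      ‖z t - Complex.exp (-((b * φ t : ℝ) * Complex.I)) * z 0‖ ≤ κ * t ∧
      ‖Complex.I * b * (w t - w 0) + Complex.exp (-((b * φ t : ℝ) * Complex.I)) * z 0 - z 0‖
        ≤ 2 * (κ * t) := by
  set φ : ℝ → ℝ := fun t => ∫ s in (0 : ℝ)..t, g s with hφ
  have hφ' : ∀ t, HasDerivAt φ (g t) t := fun t => (hg.integral_hasStrictDerivAt 0 t).hasDerivAt
  have hφ0 : φ 0 = 0 := intervalIntegral.integral_same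
  refine ⟨φ, hφ', fun t ht => ?_⟩
  have bound : ∀ (y y' : ℝ → ℂ), (∀ s, HasDerivAt y (y' s) s) → (∀ s, ‖y' s‖ ≤ κ) →
      ‖y t - y 0‖ ≤ κ * t := fun y y' hy hy' => by
    have := convex_univ.norm_image_sub_le_of_norm_hasDerivWithin_le
      (fun s _ => (hy s).hasDerivWithinAt) (fun s _ => hy' s) (Set.mem_univ (0 : ℝ))
      (Set.mem_univ t)
    rwa [sub_zero, Real.norm_of_nonneg ht] at this
  have h1 : ‖Complex.exp ((b * φ t : ℝ) * Complex.I) * z t - z 0‖ ≤ κ * t := by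
    have := bound (fun s => Complex.exp ((b * φ s : ℝ) * Complex.I) * z s)
      (fun s => Complex.exp ((b * φ s : ℝ) * Complex.I) * f s) (fun s => by
        have h := ((((hφ' s).const_mul b).ofReal_comp.mul_const Complex.I).cexp).mul (hz s)
        refine h.congr_deriv ?_
        push_cast
        ring) (fun s => by
        rw [norm_mul, Complex.norm_exp_ofReal_mul_I, one_mul]; exact hf s)
    simpa [hφ0] using this
  have h2 : ‖(z t + Complex.I * b * w t) - (z 0 + Complex.I * b * w 0)‖ ≤ κ * t :=
    bound (fun s => z s + Complex.I * b * w s) f (fun s => by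
      refine ((hz s).add ((hw s).const_mul (Complex.I * b))).congr_deriv ?_
      ring) hf
  have h3 : ‖z t - Complex.exp (-((b * φ t : ℝ) * Complex.I)) * z 0‖ ≤ κ * t := by
    have e : z t - Complex.exp (-((b * φ t : ℝ) * Complex.I)) * z 0
        = Complex.exp (-((b * φ t : ℝ) * Complex.I)) *
          (Complex.exp ((b * φ t : ℝ) * Complex.I) * z t - z 0) := by
      rw [mul_sub, ← mul_assoc, ← Complex.exp_add, neg_add_cancel, Complex.exp_zero, one_mul]
    rw [e, norm_mul, ← neg_mul, ← Complex.ofReal_neg, Complex.norm_exp_ofReal_mul_I, one_mul]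
    exact h1
  refine ⟨h3, ?_⟩
  calc _ = ‖((z t + Complex.I * b * w t) - (z 0 + Complex.I * b * w 0))
        - (z t - Complex.exp (-((b * φ t : ℝ) * Complex.I)) * z 0)‖ := by congr 1; ring
    _ ≤ _ := (norm_sub_le _ _).trans (by linarith)

/-- A phase with speed at least `1 / G` realizes every rotation of angular speed `b` during a
time interval of length `2 π G / |b|`. -/
theorem exists_exp_phase_eq {b G s t : ℝ} (hb : b ≠ 0) (hG : 0 < G) (hst : s < t)
    (hlen : 2 * π * G / |b| ≤ t - s) {φ g : ℝ → ℝ} (hφ : ∀ τ, HasDerivAt φ (g τ) τ)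
    (hg : ∀ τ ∈ Set.Icc s t, 1 / G ≤ g τ) {e : ℂ} (he : ‖e‖ = 1) :
    ∃ τ ∈ Set.Icc s t, Complex.exp (-((b * φ τ : ℝ) * Complex.I)) = e := by
  have hb' : 0 < |b| := abs_pos.mpr hb
  have hcont : Continuous φ := continuous_iff_continuousAt.mpr fun τ => (hφ τ).continuousAt
  have hgap : 2 * π / |b| ≤ φ t - φ s := by
    obtain ⟨τ, hτ, hslope⟩ := exists_hasDerivAt_eq_slope φ g hst hcont.continuousOn
      fun τ _ => hφ τ
    have h := hg τ (Set.Ioo_subset_Icc_self hτ)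
    rw [hslope, div_le_div_iff₀ hG (by linarith)] at h
    have h' : 2 * π / |b| * G ≤ t - s := by convert hlen using 1; ring
    nlinarith
  have hP : 0 < 2 * π / |b| := by positivity
  obtain ⟨k, ⟨hk1, hk2⟩, -⟩ := existsUnique_add_zsmul_mem_Ico hP (-(Complex.arg e) / b) (φ s)
  obtain ⟨τ, hτ, hτe⟩ := intermediate_value_Icc hst.le hcont.continuousOn
    (show -(Complex.arg e) / b + k • (2 * π / |b|) ∈ Set.Icc (φ s) (φ t) from
      ⟨hk1, by linarith⟩)
  refine ⟨τ, hτ, ?_⟩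
  have hee : Complex.exp (Complex.arg e * Complex.I) = e := by
    simpa [he] using Complex.norm_mul_exp_arg_mul_I e
  obtain ⟨j, hj⟩ : ∃ j : ℤ, b * φ τ = -Complex.arg e + j * (2 * π) := by
    rw [hτe, zsmul_eq_mul]
    rcases abs_cases b with ⟨h, -⟩ | ⟨h, -⟩
    · exact ⟨k, by rw [h]; field_simp⟩
    · exact ⟨-k, by rw [h]; push_cast; field_simp⟩
  rw [hj]
  conv_rhs => rw [← hee]
  rw [Complex.exp_eq_exp_iff_exists_int]
  exact ⟨-j, by push_cast; ring⟩

theorem en_eq_norm_mk (v : V2) : en v = ‖(⟨v.1, v.2⟩ : ℂ)‖ := by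
  rw [en, Complex.norm_def, Complex.normSq_mk]
  congr 1
  ring

theorem HasDerivAt.complex_mk {Y : ℝ → V2} {Y' : V2} {t : ℝ} (h : HasDerivAt Y Y' t) :
    HasDerivAt (fun s => (⟨(Y s).1, (Y s).2⟩ : ℂ)) ⟨Y'.1, Y'.2⟩ t :=
  (Complex.equivRealProdCLM.symm : V2 →L[ℝ] ℂ).hasFDerivAt.comp_hasDerivAt t h

/-- **Bending lemma for a constant nonzero magnetic field** (Lemma 4.2):
all moderately fast trajectories of `v̂⊥𝔟 + F` visit the ball `B(x₀, r₀/2)`,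
robustly under a small perturbing force `F`, and their speeds stay comparable
to the initial speed. The constants `c₀` and `m̲` depend only on `𝔟, x₀, r₀`,
while `T₀` and `κ` may also depend on `M̄`. -/
theorem bending_constant_field
    (x₀ : V2) (r₀ : ℝ) (hr₀ : 0 < r₀) (𝔟 : ℝ) (h𝔟 : 𝔟 ≠ 0) :
    ∃ c₀ > (0 : ℝ), ∃ m > (0 : ℝ), ∀ Mb : ℝ, 1 < Mb →
      ∃ T₀ > (0 : ℝ), ∃ κ > (0 : ℝ),
        ∀ c ≥ c₀, ∀ Force : ℝ → V2 → V2 → V2,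
          (∀ t, ∃ Lip : NNReal, LipschitzWith Lip fun z : V2 × V2 => Force t z.1 z.2) →
          (∀ t x v, en (Force t x v) ≤ κ) →
          ∀ x v : V2, m ≤ en v → en v ≤ Mb →
          ∀ X V : ℝ → V2,
            IsRelChar c (fun t y w => 𝔟 • pperp (vhat c w) + Force t y w) 0 x v X V →
            (∃ t ∈ Set.Ioo (T₀ / 4) (3 * T₀ / 4), X t ∈ ballT2 x₀ (r₀ / 2)) ∧
            (∀ s ∈ Set.Icc (0 : ℝ) T₀,
              en v / 2 ≤ en (V s) ∧ en (V s) ≤ 2 * en v) := by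
  obtain ⟨R₀, hR₀, hcircle⟩ := exists_radius_circle_meets_lattice_nhds (r₀ / 4) (by positivity)
  have hb : 0 < |𝔟| := abs_pos.mpr h𝔟
  refine ⟨1, one_pos, R₀ * |𝔟|, by positivity, fun Mb hMb => ?_⟩
  set G : ℝ := 1 + 2 * Mb
  have hG0 : 0 < G := by linarith
  set T : ℝ := 6 * π * G / |𝔟| with hT
  have hT0 : 0 < T := by positivity
  set κ : ℝ := min (R₀ * |𝔟| / 2) (r₀ * |𝔟| / 8) / T with hκ
  have hκ0 : 0 < κ := by positivity
  have hκT : κ * T = min (R₀ * |𝔟| / 2) (r₀ * |𝔟| / 8) := by rw [hκ]; field_simp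
  have hκT1 : κ * T ≤ R₀ * |𝔟| / 2 := hκT ▸ min_le_left _ _
  have hκT2 : κ * T ≤ r₀ * |𝔟| / 8 := hκT ▸ min_le_right _ _
  refine ⟨T, hT0, κ, hκ0, ?_⟩
  rintro c hc Force - hF x v hv1 hv2 X V ⟨rfl, rfl, hXV⟩
  set w : ℝ → ℂ := fun t => ⟨(X t).1, (X t).2⟩ with hw
  set z : ℝ → ℂ := fun t => ⟨(V t).1, (V t).2⟩ with hz
  set g : ℝ → ℝ := fun t => 1 / √(1 + ((V t).1 ^ 2 + (V t).2 ^ 2) / c ^ 2) with hgdef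
  have hVc : Continuous V := continuous_iff_continuousAt.mpr fun t => (hXV t).2.continuousAt
  have hgc : Continuous g := by
    refine continuous_const.div (by fun_prop) fun t => ?_
    positivity
  have hzn : ∀ t, en (V t) = ‖z t‖ := fun t => en_eq_norm_mk _
  obtain ⟨φ, hφ, hest⟩ := exists_phase_norm_sub_rotation_le 𝔟 κ g hgc w z
    (fun t => ⟨(Force t (X t) (V t)).1, (Force t (X t) (V t)).2⟩)
    (fun t => by
      convert (hXV t).1.complex_mk using 1
      apply Complex.ext <;> simp [hz, hgdef, vhat])
    (fun t => by
      convert (hXV t).2.complex_mk using 1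
      apply Complex.ext <;> simp [hz, hgdef, vhat, pperp])
    (fun t => by rw [← en_eq_norm_mk]; exact hF _ _ _)
  rw [hzn] at hv1 hv2 ⊢
  have hspeed : ∀ s ∈ Set.Icc (0 : ℝ) T, ‖z 0‖ / 2 ≤ ‖z s‖ ∧ ‖z s‖ ≤ 2 * ‖z 0‖ := by
    rintro s ⟨hs0, hsT⟩
    have h := (hest s hs0).1
    have hκs : κ * s ≤ κ * T := by gcongr
    have hn : ‖Complex.exp (-((𝔟 * φ s : ℝ) * Complex.I)) * z 0‖ = ‖z 0‖ := by
      rw [norm_mul, ← neg_mul, ← Complex.ofReal_neg, Complex.norm_exp_ofReal_mul_I, one_mul]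
    have h' := abs_le.mp ((abs_norm_sub_norm_le _ _).trans h)
    rw [hn] at h'
    constructor <;> linarith [h'.1, h'.2]
  refine ⟨?_, fun s hs => by rw [hzn]; exact hspeed s hs⟩
  have hz0 : 0 < ‖z 0‖ := by
    have : 0 < R₀ * |𝔟| := by positivity
    linarith
  have hglow : ∀ τ ∈ Set.Icc (T / 3) (2 * T / 3), 1 / G ≤ g τ := by
    rintro τ ⟨h1, h2⟩
    have hτ := (hspeed τ ⟨by linarith, by linarith⟩).2
    refine one_div_le_one_div_of_le (by positivity) ?_
    have hsq : (V τ).1 ^ 2 + (V τ).2 ^ 2 = ‖z τ‖ ^ 2 := by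
      rw [Complex.sq_norm, Complex.normSq_mk]; ring
    rw [hsq]
    refine Real.sqrt_le_iff.mpr ⟨hG0.le, ?_⟩
    have hdiv : ‖z τ‖ ^ 2 / c ^ 2 ≤ ‖z τ‖ ^ 2 := div_le_self (by positivity) (by nlinarith)
    nlinarith [norm_nonneg (z τ)]
  have hIb : Complex.I * (𝔟 : ℂ) ≠ 0 := by simp [h𝔟]
  have hIbn : ‖Complex.I * (𝔟 : ℂ)‖ = |𝔟| := by simp
  obtain ⟨q, hq, m, n, hmn⟩ := hcircle (‖z 0‖ / |𝔟|) (by rwa [ge_iff_le, le_div_iff₀ hb])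
    (w 0 + z 0 / (Complex.I * 𝔟)) ⟨x₀.1, x₀.2⟩
  have hz0' : z 0 ≠ 0 := norm_pos_iff.mp hz0
  obtain ⟨t, ⟨ht1, ht2⟩, hte⟩ := exists_exp_phase_eq h𝔟 hG0 (by linarith : T / 3 < 2 * T / 3)
    (le_of_eq (by rw [hT]; ring)) hφ hglow
    (e := -(Complex.I * 𝔟) * (q - (w 0 + z 0 / (Complex.I * 𝔟))) / z 0)
    (by rw [norm_div, norm_mul, norm_neg, hIbn, hq]; field_simp)
  refine ⟨t, ⟨by linarith, by linarith⟩, m, n, ?_⟩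
  have herr : ‖w t - q‖ ≤ r₀ / 4 := by
    have h := (hest t (by linarith)).2
    rw [hte, div_mul_cancel₀ _ hz0'] at h
    have e : Complex.I * 𝔟 * (w t - w 0)
        + -(Complex.I * 𝔟) * (q - (w 0 + z 0 / (Complex.I * 𝔟))) - z 0
        = Complex.I * 𝔟 * (w t - q) := by
      linear_combination mul_div_cancel₀ (z 0) hIb
    rw [e, norm_mul, hIbn] at h
    have hκt : κ * t ≤ κ * T := by gcongr; linarith
    by_contra! hcon
    nlinarith
  calc _ = ‖w t - ((⟨x₀.1, x₀.2⟩ : ℂ) + m + n * Complex.I)‖ := by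
        rw [en_eq_norm_mk]
        congr 1
        apply Complex.ext <;> simp [hw]
    _ ≤ ‖w t - q‖ + ‖q - ((⟨x₀.1, x₀.2⟩ : ℂ) + m + n * Complex.I)‖ :=
        norm_sub_le_norm_sub_add_norm_sub _ _ _
    _ < r₀ / 2 := by linarith

end
end
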